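/- Suppose A ⊂ F_p satisfies |A| ≪ p^{32/55}. Then max{|A-A|, |AA|} ≳ |A|^{39/32}. -/

import Mathlib

open Pointwise

/-!
A coincidence `l b = l' b'` between values of affine maps says that two lines in space meet, one
from each of two families; the lines of either family lie in parallel planes and have parameters in
a three-dimensional space. After a projective transformation of the parameters with transcendental
coefficients, distinct lines of a family lie in distinct planes, while any line of parameters still
contains few of them. Suppose that every line of the larger family meets too many lines of the
other one. Then a surface of low degree, drawn through a random sample of the other family,
contains a positive proportion of the larger one. By elimination, a component of this surface
contains few lines of the larger family unless it consists of inflection points of its sections by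
the planes of that family. In that case Taylor expansion, where the degree has to be less than the
characteristic, puts the tangent lines of the sections on the component, and then the lines of the
other family on the component have collinear parameters, so there are few of them. This
contradiction leaves `O(N ^ (3 / 2))` coincidences among `N` pairs `(l, b)`.

Applied to the maps `x ↦ (a c) x + d` at `x = c⁻¹` this bounds the additive energy
`E⁺(A, A - A)`, and applied to `b ↦ c (b + d)` with `d` a popular difference it bounds the third
moment energy `E₃⁺(A)`. Both estimates enter the inequality
`|A| ^ 8 ≪ |A - A| E⁺(A, A - A) E₃⁺(A)` of Konyagin and Rudnev.
-/

namespace SumProduct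

open Finset MvPolynomial

section Elimination

attribute [local instance] Polynomial.algebra in
theorem isCoprime_map_fractionRing {A : Type*} [CommRing A] [IsDomain A] {f g : Polynomial A}
    (hf : Prime f) (hdeg : 0 < f.natDegree) (hfg : ¬ f ∣ g) :
    IsCoprime (f.map (algebraMap A (FractionRing A))) (g.map (algebraMap A (FractionRing A))) := by
  let K := FractionRing A
  let M := (nonZeroDivisors A).map (Polynomial.C : A →+* Polynomial A)
  have : IsLocalization M (Polynomial K) := Polynomial.isLocalization (nonZeroDivisors A) K
  let I := Ideal.span {f}
  have hI : I.IsPrime := (Ideal.span_singleton_prime hf.ne_zero).mpr hf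
  have hdisj : Disjoint (M : Set (Polynomial A)) I := by
    refine Set.disjoint_left.mpr ?_
    rintro _ ⟨a, ha, rfl⟩ hdvd
    have hle := Polynomial.natDegree_le_of_dvd (Ideal.mem_span_singleton.mp hdvd)
      (Polynomial.C_ne_zero.mpr (nonZeroDivisors.ne_zero ha))
    rw [Polynomial.natDegree_C] at hle
    omega
  have hmap : I.map (algebraMap (Polynomial A) (Polynomial K)) =
      Ideal.span {f.map (algebraMap A K)} := by
    rw [Ideal.map_span, Set.image_singleton]; rfl
  have hprime : Prime (f.map (algebraMap A K)) := by
    rw [← Ideal.span_singleton_prime (Polynomial.map_ne_zero_iff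
      (IsFractionRing.injective A K) |>.mpr hf.ne_zero), ← hmap]
    exact IsLocalization.isPrime_of_isPrime_disjoint M _ I hI hdisj
  refine (hprime.irreducible.coprime_iff_not_dvd).mpr fun hdvd => hfg ?_
  rw [← Ideal.mem_span_singleton, ← hmap] at hdvd
  have hg : g ∈ (I.map (algebraMap (Polynomial A) (Polynomial K))).under (Polynomial A) := hdvd
  rwa [IsLocalization.under_map_of_isPrime_disjoint M (Polynomial K) hI hdisj,
    Ideal.mem_span_singleton] at hg

theorem resultant_ne_zero_of_prime {A : Type*} [CommRing A] [IsDomain A] {f g : Polynomial A}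
    (hf : Prime f) (hdeg : 0 < f.natDegree) (hfg : ¬ f ∣ g) : f.resultant g ≠ 0 := by
  have hinj := IsFractionRing.injective A (FractionRing A)
  have hres := Polynomial.resultant_ne_zero _ _ (isCoprime_map_fractionRing hf hdeg hfg)
  rw [Polynomial.natDegree_map_eq_of_injective hinj, Polynomial.natDegree_map_eq_of_injective hinj,
    Polynomial.resultant_map_map] at hres
  exact fun h => hres (by rw [h, map_zero])

variable {R : Type*} [CommRing R] {n : ℕ}

theorem totalDegree_det_le {σ ι : Type*} [Fintype ι] [DecidableEq ι]
    (M : Matrix ι ι (MvPolynomial σ R)) {d : ℕ} (hM : ∀ i j, (M i j).totalDegree ≤ d) :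
    M.det.totalDegree ≤ Fintype.card ι * d := by
  rw [Matrix.det_apply]
  refine totalDegree_finsetSum_le fun τ _ => (totalDegree_smul_le _ _).trans ?_
  refine (totalDegree_finsetProd _ _).trans ((sum_le_sum fun i _ => hM (τ i) i).trans ?_)
  simp

theorem totalDegree_coeff_finSuccEquiv_le (f : MvPolynomial (Fin (n + 1)) R) (i : ℕ) :
    ((finSuccEquiv R n f).coeff i).totalDegree ≤ f.totalDegree := by
  by_cases h : (finSuccEquiv R n f).coeff i = 0
  · simp [h]
  · exact (Nat.le_add_right _ i).trans (totalDegree_coeff_finSuccEquiv_add_le f i h)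

theorem natDegree_finSuccEquiv_le (f : MvPolynomial (Fin (n + 1)) R) :
    (finSuccEquiv R n f).natDegree ≤ f.totalDegree :=
  (natDegree_finSuccEquiv f).trans_le (degreeOf_le_totalDegree f 0)

theorem finSuccEquiv_rename_succ (r : MvPolynomial (Fin n) R) :
    finSuccEquiv R n (rename Fin.succ r) = Polynomial.C r := by
  have h : ((finSuccEquiv R n).toAlgHom.comp (rename Fin.succ)) =
      (IsScalarTower.toAlgHom R (MvPolynomial (Fin n) R) (Polynomial (MvPolynomial (Fin n) R))) :=
    algHom_ext fun i => by simp [finSuccEquiv_X_succ]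
  exact DFunLike.congr_fun h r

theorem totalDegree_resultant_finSuccEquiv_le (f h : MvPolynomial (Fin (n + 1)) R) :
    ((finSuccEquiv R n f).resultant (finSuccEquiv R n h)).totalDegree ≤
      (f.totalDegree + h.totalDegree) ^ 2 := by
  refine (totalDegree_det_le (d := f.totalDegree + h.totalDegree) _ fun i j => ?_).trans ?_
  · have hf := totalDegree_coeff_finSuccEquiv_le f
    have hh := totalDegree_coeff_finSuccEquiv_le h
    unfold Polynomial.sylvester
    simp only [Matrix.of_apply]
    refine Fin.addCases (fun j => ?_) (fun j => ?_) j
    · simp only [Fin.addCases_left]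
      split_ifs
      · exact (hh _).trans (Nat.le_add_left _ _)
      · simp
    · simp only [Fin.addCases_right]
      split_ifs
      · exact (hf _).trans (Nat.le_add_right _ _)
      · simp
  · rw [Fintype.card_fin, sq]
    gcongr <;> exact natDegree_finSuccEquiv_le _

theorem exists_mul_add_mul_eq_rename_succ [IsDomain R] {f h : MvPolynomial (Fin (n + 1)) R}
    (hf : Prime f) (hdeg : 0 < f.degreeOf 0) (hfh : ¬ f ∣ h) :
    ∃ (r : MvPolynomial (Fin n) R) (u v : MvPolynomial (Fin (n + 1)) R), r ≠ 0 ∧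
      r.totalDegree ≤ (f.totalDegree + h.totalDegree) ^ 2 ∧
      f * u + h * v = rename Fin.succ r := by
  let e := finSuccEquiv R n
  have hprime : Prime (e f) := (MulEquiv.prime_iff e.toMulEquiv).mpr hf
  have hpos : 0 < (e f).natDegree := by rwa [natDegree_finSuccEquiv]
  have hndvd : ¬ e f ∣ e h := fun hd => hfh ((map_dvd_iff e).mp hd)
  obtain ⟨u, v, -, -, huv⟩ := Polynomial.exists_mul_add_mul_eq_C_resultant (e f) (e h) le_rfl le_rfl
    (Or.inl hpos.ne')
  refine ⟨(e f).resultant (e h), e.symm u, e.symm v, resultant_ne_zero_of_prime hprime hpos hndvd,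
    totalDegree_resultant_finSuccEquiv_le f h, e.injective ?_⟩
  rw [map_add, map_mul, map_mul, e.apply_symm_apply, e.apply_symm_apply, huv]
  exact (finSuccEquiv_rename_succ _).symm

end Elimination

section Lines

variable {F : Type*} [Field F]

/-- In the space with coordinates `(Y, W, Z) = (X 0, X 1, X 2)`, the line `Z = x`, `Y = y W + z`
attached to `s = (x, y, z)`, parametrised by `W`. -/
noncomputable def horizontalLine (s : F × F × F) : Fin 3 → Polynomial F :=
  ![Polynomial.C s.2.1 * Polynomial.X + Polynomial.C s.2.2, Polynomial.X, Polynomial.C s.1]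

/-- In the space with coordinates `(Y, W, Z) = (X 0, X 1, X 2)`, the line `W = x`, `Y = y Z + z`
attached to `t = (x, y, z)`, parametrised by `Z`. -/
noncomputable def verticalLine (t : F × F × F) : Fin 3 → Polynomial F :=
  ![Polynomial.C t.2.1 * Polynomial.X + Polynomial.C t.2.2, Polynomial.C t.1, Polynomial.X]

theorem aeval_verticalLine_rename_succ (t : F × F × F) (r : MvPolynomial (Fin 2) F) :
    aeval (verticalLine t) (rename Fin.succ r) =
      uniqueAlgEquiv F (Fin 1) ((finSuccEquiv F 1 r).eval (C t.1)) := by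
  have h : (aeval (verticalLine t)).comp (rename Fin.succ) =
      (uniqueAlgEquiv F (Fin 1)).toAlgHom.comp
        (((Polynomial.aeval (C t.1)).restrictScalars F).comp (finSuccEquiv F 1).toAlgHom) := by
    refine algHom_ext fun i => ?_
    fin_cases i
    · simp [verticalLine, finSuccEquiv_X_zero]
    · have hX : finSuccEquiv F 1 (X 1) = Polynomial.C (X 0) :=
        finSuccEquiv_X_succ (j := 0)
      simp [verticalLine, hX]
  simpa [Polynomial.coe_aeval_eq_eval] using DFunLike.congr_fun h r

theorem card_le_natDegree_of_forall_eval_eq_zero {α A : Type*} [CommRing A] [IsDomain A]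
    {q : Polynomial A} (hq : q ≠ 0) {T : Finset α} {φ : α → A} (hinj : Set.InjOn φ T)
    (hT : ∀ t ∈ T, q.eval (φ t) = 0) : #T ≤ q.natDegree := by
  classical
  rw [← card_image_of_injOn hinj]
  refine (card_le_card (image_subset_iff.mpr fun t ht => ?_)).trans
    ((Multiset.toFinset_card_le q.roots).trans (Polynomial.card_roots' q))
  rw [Multiset.mem_toFinset, Polynomial.mem_roots hq]
  exact hT t ht

theorem card_le_totalDegree_of_rename_succ {r : MvPolynomial (Fin 2) F} (hr : r ≠ 0)
    {T : Finset (F × F × F)} (hinj : Set.InjOn Prod.fst (T : Set (F × F × F)))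
    (hT : ∀ t ∈ T, aeval (verticalLine t) (rename Fin.succ r) = 0) :
    #T ≤ r.totalDegree := by
  have hne : finSuccEquiv F 1 r ≠ 0 := (map_ne_zero_iff _ (finSuccEquiv F 1).injective).mpr hr
  refine (card_le_natDegree_of_forall_eval_eq_zero hne ((C_injective (Fin 1) F).comp_injOn hinj)
    fun t ht => ?_).trans (natDegree_finSuccEquiv_le r)
  have hzero := hT t ht
  rwa [aeval_verticalLine_rename_succ, map_eq_zero_iff _ (uniqueAlgEquiv F (Fin 1)).injective]
    at hzero

theorem card_verticalLines_le_of_prime {f h : MvPolynomial (Fin 3) F} (hf : Prime f)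
    (hdeg : 0 < f.degreeOf 0) (hfh : ¬ f ∣ h) {T : Finset (F × F × F)}
    (hinj : Set.InjOn Prod.fst (T : Set (F × F × F)))
    (hTf : ∀ t ∈ T, aeval (verticalLine t) f = 0) (hTh : ∀ t ∈ T, aeval (verticalLine t) h = 0) :
    #T ≤ (f.totalDegree + h.totalDegree) ^ 2 := by
  obtain ⟨r, u, v, hr, hrdeg, huv⟩ := exists_mul_add_mul_eq_rename_succ hf hdeg hfh
  refine (card_le_totalDegree_of_rename_succ hr hinj fun t ht => ?_).trans hrdeg
  rw [← huv, map_add, map_mul, map_mul, hTf t ht, hTh t ht, zero_mul, zero_mul, add_zero]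

theorem card_verticalLines_le_of_degreeOf_eq_zero {f : MvPolynomial (Fin 3) F} (hf : f ≠ 0)
    (hdeg : f.degreeOf 0 = 0) {T : Finset (F × F × F)}
    (hinj : Set.InjOn Prod.fst (T : Set (F × F × F)))
    (hT : ∀ t ∈ T, aeval (verticalLine t) f = 0) : #T ≤ f.totalDegree := by
  have hC : finSuccEquiv F 2 f = Polynomial.C ((finSuccEquiv F 2 f).coeff 0) :=
    Polynomial.eq_C_of_natDegree_eq_zero ((natDegree_finSuccEquiv f).trans hdeg)
  have hrename : rename Fin.succ ((finSuccEquiv F 2 f).coeff 0) = f :=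
    (finSuccEquiv F 2).injective ((finSuccEquiv_rename_succ _).trans hC.symm)
  have hne : (finSuccEquiv F 2 f).coeff 0 ≠ 0 := fun h => hf (by rw [← hrename, h, map_zero])
  refine (card_le_totalDegree_of_rename_succ hne hinj fun t ht => ?_).trans
    (totalDegree_coeff_finSuccEquiv_le f 0)
  rw [hrename, hT t ht]

end Lines

section TangentLines

theorem natDegree_aeval_le {R S σ : Type*} [CommSemiring R] [CommSemiring S] [Algebra R S]
    (f : MvPolynomial σ R) {v : σ → Polynomial S} (hv : ∀ i, (v i).natDegree ≤ 1) :
    (aeval v f).natDegree ≤ f.totalDegree := by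
  rw [← aeval_map_algebraMap S v f]
  have hmap : (map (algebraMap R S) f).totalDegree ≤ f.totalDegree :=
    Finset.sup_mono (support_map_subset _ f)
  exact (aeval_natDegree_le _ hmap v hv).trans (mul_one _).le

/-- The derivation of `S[X]` that applies `D` to every coefficient. -/
noncomputable def coeffDerivation {R S : Type*} [CommRing R] [CommRing S] [Algebra R S]
    (D : Derivation R S S) : Derivation R (Polynomial S) (Polynomial S) :=
  PolynomialModule.equivPolynomialSelf.toLinearMap.compDer D.mapCoeffs

section CoeffDerivation

variable {R S : Type*} [CommRing R] [CommRing S] [Algebra R S] (D : Derivation R S S)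

theorem coeff_coeffDerivation (q : Polynomial S) (n : ℕ) :
    (coeffDerivation D q).coeff n = D (q.coeff n) := rfl

theorem coeffDerivation_C (a : S) :
    coeffDerivation D (Polynomial.C a) = Polynomial.C (D a) := by
  ext n
  rw [coeff_coeffDerivation, Polynomial.coeff_C, Polynomial.coeff_C, apply_ite D, map_zero]

theorem coeffDerivation_X : coeffDerivation D Polynomial.X = 0 := by
  ext n
  rw [coeff_coeffDerivation, Polynomial.coeff_X, apply_ite D, D.map_one_eq_zero, map_zero,
    ite_self, Polynomial.coeff_zero]

end CoeffDerivation

theorem derivation_aeval_eq_sum {R S M σ : Type*} [CommRing R] [CommRing S] [Algebra R S]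
    [AddCommGroup M] [Module R M] [Module S M] [IsScalarTower R S M] [Fintype σ]
    (D : Derivation R S M) (v : σ → S) (f : MvPolynomial σ R) :
    D (aeval v f) = ∑ i, aeval v (pderiv i f) • D (v i) := by
  classical
  induction f using MvPolynomial.induction_on with
  | C a => simp
  | add p q hp hq => simp only [map_add, hp, hq, add_smul, sum_add_distrib]
  | mul_X p j hp =>
    simp only [map_mul, aeval_X, Derivation.leibniz, hp, smul_eq_mul, map_add, pderiv_X, add_smul,
      sum_add_distrib, smul_sum, mul_smul]
    congr 1
    rw [sum_eq_single j] <;> simp +contextual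

variable {F : Type*} [Field F] (f : MvPolynomial (Fin 3) F)

/-- Differentiation along `(-∂₂f, 0, ∂₀f)`, the direction tangent to the surface `f = 0` inside the
planes on which the middle coordinate is constant. -/
noncomputable def tangentDerivation :
    Derivation F (MvPolynomial (Fin 3) F) (MvPolynomial (Fin 3) F) :=
  pderiv 0 f • pderiv 2 - pderiv 2 f • pderiv 0

/-- The second derivative of `f` along `(-∂₂f, 0, ∂₀f)`; it vanishes on `f = 0` exactly where the
section of this surface by a plane of constant middle coordinate has an inflection. -/
noncomputable def inflectionPoly : MvPolynomial (Fin 3) F :=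
  pderiv 0 f * tangentDerivation f (pderiv 2 f) - pderiv 2 f * tangentDerivation f (pderiv 0 f)

/-- The generic line in the direction `(-∂₂f, 0, ∂₀f)`, with parameter `Polynomial.X`. -/
noncomputable def tangentLine : Fin 3 → Polynomial (MvPolynomial (Fin 3) F) :=
  ![Polynomial.C (X 0) - Polynomial.C (pderiv 2 f) * Polynomial.X, Polynomial.C (X 1),
    Polynomial.C (X 2) + Polynomial.C (pderiv 0 f) * Polynomial.X]

theorem tangentDerivation_apply (g : MvPolynomial (Fin 3) F) :
    tangentDerivation f g = pderiv 0 f * pderiv 2 g - pderiv 2 f * pderiv 0 g := by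
  simp [tangentDerivation]

theorem tangentDerivation_self : tangentDerivation f f = 0 := by
  rw [tangentDerivation_apply, mul_comm, sub_self]

-- The derivation on the left annihilates the coordinates of `tangentLine f` up to multiples of
-- the derivatives of `∂₀f` and `∂₂f`, which the chain rule assembles into `inflectionPoly f`.
theorem tangentLine_identity :
    Polynomial.C (pderiv 0 f) * coeffDerivation (tangentDerivation f) (aeval (tangentLine f) f) -
      (Polynomial.C (pderiv 0 f) + Polynomial.X * Polynomial.C (tangentDerivation f (pderiv 0 f))) *
        Polynomial.derivative (aeval (tangentLine f) f) =
      -Polynomial.C (inflectionPoly f) *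
        (Polynomial.X * aeval (tangentLine f) (pderiv 0 f)) := by
  have hX : ∀ i, tangentDerivation f (X i) = ![-pderiv 2 f, 0, pderiv 0 f] i := by
    intro i
    fin_cases i <;> simp [tangentDerivation_apply, pderiv_X]
  have hderivative := derivation_aeval_eq_sum
    ((Polynomial.derivative' (R := MvPolynomial (Fin 3) F)).restrictScalars F) (tangentLine f) f
  simp only [Derivation.restrictScalars_apply, Polynomial.derivative'_apply] at hderivative
  rw [derivation_aeval_eq_sum, hderivative]
  simp only [tangentLine, inflectionPoly, Fin.sum_univ_three, smul_eq_mul, Matrix.cons_val_zero,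
    Matrix.cons_val_one, Matrix.cons_val, map_sub, map_add, map_mul, Derivation.leibniz,
    coeffDerivation_C, coeffDerivation_X, hX, map_neg, map_zero, Polynomial.derivative_C,
    Polynomial.derivative_X, Polynomial.derivative_mul]
  ring

theorem natDegree_aeval_tangentLine_le :
    (aeval (tangentLine f) f).natDegree ≤ f.totalDegree := by
  refine natDegree_aeval_le f fun i => ?_
  fin_cases i
  · change (Polynomial.C (X 0) - Polynomial.C (pderiv 2 f) * Polynomial.X).natDegree ≤ 1
    compute_degree
  · exact (Polynomial.natDegree_C _).trans_le zero_le_one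
  · change (Polynomial.C (X 2) + Polynomial.C (pderiv 0 f) * Polynomial.X).natDegree ≤ 1
    compute_degree

theorem coeff_zero_aeval_tangentLine : (aeval (tangentLine f) f).coeff 0 = f := by
  have h : ((Polynomial.aeval (0 : MvPolynomial (Fin 3) F)).restrictScalars F).comp
      (aeval (tangentLine f)) = AlgHom.id F _ := by
    refine algHom_ext fun i => ?_
    fin_cases i <;> simp [tangentLine]
  rw [Polynomial.coeff_zero_eq_aeval_zero]
  exact DFunLike.congr_fun h f

variable {f}

theorem dvd_coeff_succ_aeval_tangentLine (hf : Prime f) (hderiv : ¬ f ∣ pderiv 0 f)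
    (hinfl : f ∣ inflectionPoly f) {n : ℕ} (hn : ((n + 1 : ℕ) : F) ≠ 0)
    (ih : ∀ m ≤ n, f ∣ (aeval (tangentLine f) f).coeff m) :
    f ∣ (aeval (tangentLine f) f).coeff (n + 1) := by
  set G := aeval (tangentLine f) f
  set D := tangentDerivation f
  have hcoeff : pderiv 0 f * D (G.coeff n) - (pderiv 0 f * (G.coeff (n + 1) * (n + 1)) +
      D (pderiv 0 f) * (Polynomial.X * Polynomial.derivative G).coeff n) =
      inflectionPoly f * -(Polynomial.X * aeval (tangentLine f) (pderiv 0 f)).coeff n := by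
    have h := congrArg (fun q => q.coeff n) (tangentLine_identity f)
    rw [add_mul, Polynomial.X_mul_C, mul_assoc, ← map_neg] at h
    simp only [Polynomial.coeff_sub, Polynomial.coeff_add, Polynomial.coeff_C_mul,
      coeff_coeffDerivation, Polynomial.coeff_derivative] at h
    linear_combination h
  have hD : f ∣ D (G.coeff n) := by
    obtain ⟨g, hg⟩ := ih n le_rfl
    rw [hg, Derivation.leibniz, tangentDerivation_self, smul_zero, add_zero, smul_eq_mul]
    exact dvd_mul_right f _
  have hXderiv : f ∣ (Polynomial.X * Polynomial.derivative G).coeff n := by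
    cases n with
    | zero => simp
    | succ m =>
      rw [Polynomial.coeff_X_mul, Polynomial.coeff_derivative]
      exact (ih (m + 1) le_rfl).mul_right _
  have hmul : f ∣ pderiv 0 f * (G.coeff (n + 1) * C ((n + 1 : ℕ) : F)) := by
    have h : pderiv 0 f * (G.coeff (n + 1) * C ((n + 1 : ℕ) : F)) =
        pderiv 0 f * D (G.coeff n) -
          D (pderiv 0 f) * (Polynomial.X * Polynomial.derivative G).coeff n -
          inflectionPoly f * -(Polynomial.X * aeval (tangentLine f) (pderiv 0 f)).coeff n := by
      rw [← hcoeff, map_natCast]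
      push_cast
      ring
    rw [h]
    exact dvd_sub (dvd_sub (hD.mul_left _) (hXderiv.mul_left _)) (hinfl.mul_right _)
  exact ((IsUnit.mk0 _ hn).map C).dvd_mul_right.mp ((hf.dvd_or_dvd hmul).resolve_left hderiv)

theorem C_dvd_aeval_tangentLine (hf : Prime f) (hderiv : ¬ f ∣ pderiv 0 f)
    (hinfl : f ∣ inflectionPoly f)
    (hchar : ∀ n : ℕ, 0 < n → n ≤ f.totalDegree → (n : F) ≠ 0) :
    Polynomial.C f ∣ aeval (tangentLine f) f := by
  rw [Polynomial.C_dvd_iff_dvd_coeff]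
  intro n
  induction n using Nat.strong_induction_on with
  | _ n ih =>
    rcases lt_or_ge f.totalDegree n with hlt | hle
    · rw [Polynomial.coeff_eq_zero_of_natDegree_lt
        ((natDegree_aeval_tangentLine_le f).trans_lt hlt)]
      exact dvd_zero f
    cases n with
    | zero => rw [coeff_zero_aeval_tangentLine]
    | succ n =>
      exact dvd_coeff_succ_aeval_tangentLine hf hderiv hinfl (hchar _ n.succ_pos hle)
        fun m hm => ih m (Nat.lt_succ_of_le hm)

end TangentLines

section Degrees

theorem totalDegree_pderiv_le {R σ : Type*} [CommSemiring R] (i : σ) (f : MvPolynomial σ R) :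
    (pderiv i f).totalDegree ≤ f.totalDegree - 1 := by
  classical
  refine Finset.sup_le fun m hm => ?_
  rw [mem_support_iff, coeff_pderiv] at hm
  have hsupp : m + Finsupp.single i 1 ∈ f.support :=
    mem_support_iff.mpr fun h => hm (by rw [h, zero_mul])
  have hle := le_totalDegree hsupp
  rw [Finsupp.sum_add_index' (fun _ => rfl) (fun _ _ _ => rfl), Finsupp.sum_single_index rfl] at hle
  omega

theorem pderiv_ne_zero {R σ : Type*} [CommSemiring R] [NoZeroDivisors R] {i : σ}
    {f : MvPolynomial σ R} (hdeg : 0 < f.degreeOf i)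
    (hchar : ∀ n : ℕ, 0 < n → n ≤ f.totalDegree → (n : R) ≠ 0) : pderiv i f ≠ 0 := by
  classical
  rw [degreeOf_eq_sup] at hdeg
  obtain ⟨m, hm, hpos⟩ := Finset.lt_sup_iff.mp hdeg
  have hcancel : m - Finsupp.single i 1 + Finsupp.single i 1 = m :=
    tsub_add_cancel_of_le (Finsupp.single_le_iff.mpr hpos)
  have hexp : (m - Finsupp.single i 1 : σ →₀ ℕ) i + 1 = m i := by
    simpa using DFunLike.congr_fun hcancel i
  intro hzero
  have hcoeff := coeff_pderiv (i := i) f (m - Finsupp.single i 1)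
  rw [hzero, coeff_zero, hcancel, ← Nat.cast_add_one, hexp, eq_comm, mul_eq_zero] at hcoeff
  exact hcoeff.elim (mem_support_iff.mp hm)
    (hchar _ hpos ((monomial_le_degreeOf i hm).trans (degreeOf_le_totalDegree f i)))

theorem not_dvd_pderiv {R σ : Type*} [CommSemiring R] [NoZeroDivisors R] {i : σ}
    {f : MvPolynomial σ R} (hdeg : 0 < f.degreeOf i)
    (hchar : ∀ n : ℕ, 0 < n → n ≤ f.totalDegree → (n : R) ≠ 0) : ¬ f ∣ pderiv i f := fun h => by
  have hle := totalDegree_le_of_dvd_of_isDomain h (pderiv_ne_zero hdeg hchar)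
  have hlt := totalDegree_pderiv_le i f
  have hpos := hdeg.trans_le (degreeOf_le_totalDegree f i)
  omega

variable {F : Type*} [Field F]

theorem totalDegree_tangentDerivation_le (f g : MvPolynomial (Fin 3) F) :
    (tangentDerivation f g).totalDegree ≤ f.totalDegree + g.totalDegree := by
  have hp : ∀ i (g : MvPolynomial (Fin 3) F), (pderiv i g).totalDegree ≤ g.totalDegree :=
    fun i g => (totalDegree_pderiv_le i g).trans (Nat.sub_le _ _)
  rw [tangentDerivation_apply]
  exact (totalDegree_sub _ _).trans (max_le
    ((totalDegree_mul _ _).trans (add_le_add (hp 0 f) (hp 2 g)))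
    ((totalDegree_mul _ _).trans (add_le_add (hp 2 f) (hp 0 g))))

theorem totalDegree_inflectionPoly_le (f : MvPolynomial (Fin 3) F) :
    (inflectionPoly f).totalDegree ≤ 3 * f.totalDegree := by
  have hmul : ∀ i j, (pderiv i f * tangentDerivation f (pderiv j f)).totalDegree ≤
      3 * f.totalDegree := fun i j => by
    have hi := totalDegree_pderiv_le i f
    have hj := totalDegree_pderiv_le j f
    have hmul := totalDegree_mul (pderiv i f) (tangentDerivation f (pderiv j f))
    have hD := totalDegree_tangentDerivation_le f (pderiv j f)
    omega
  exact (totalDegree_sub _ _).trans (max_le (hmul 0 2) (hmul 2 0))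

end Degrees

section TangentPlane

variable {F : Type*} [Field F]

theorem derivative_aeval_verticalLine (t : F × F × F) (f : MvPolynomial (Fin 3) F) :
    Polynomial.derivative (aeval (verticalLine t) f) =
      Polynomial.C t.2.1 * aeval (verticalLine t) (pderiv 0 f) +
        aeval (verticalLine t) (pderiv 2 f) := by
  have h := derivation_aeval_eq_sum (Polynomial.derivative' (R := F)) (verticalLine t) f
  rw [Polynomial.derivative'_apply] at h
  rw [h, Fin.sum_univ_three]
  simp only [verticalLine, Matrix.cons_val_zero, Matrix.cons_val_one, Matrix.cons_val, smul_eq_mul,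
    Polynomial.derivative'_apply, Polynomial.derivative_add, Polynomial.derivative_mul,
    Polynomial.derivative_C, Polynomial.derivative_X]
  ring

theorem aeval_verticalLine_inflectionPoly {t : F × F × F} {f : MvPolynomial (Fin 3) F}
    (h : aeval (verticalLine t) f = 0) : aeval (verticalLine t) (inflectionPoly f) = 0 := by
  have hZ := derivative_aeval_verticalLine t f
  have hZZ := derivative_aeval_verticalLine t (pderiv 2 f)
  rw [h, Polynomial.derivative_zero, eq_comm, add_comm, add_eq_zero_iff_eq_neg] at hZ
  rw [hZ, Polynomial.derivative_neg, Polynomial.derivative_mul, Polynomial.derivative_C,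
    derivative_aeval_verticalLine] at hZZ
  simp only [inflectionPoly, tangentDerivation_apply, map_sub, map_mul, hZ]
  linear_combination (-(aeval (verticalLine t) (pderiv 0 f)) ^ 2) * hZZ

variable (f : MvPolynomial (Fin 3) F) (s : F × F × F)

/-- An equation of the union, over the points of `horizontalLine s`, of the lines through that
point in the direction `(-∂₂f, 0, ∂₀f)`. -/
noncomputable def tangentRuledPoly : MvPolynomial (Fin 3) F :=
  Polynomial.aeval (X 1 : MvPolynomial (Fin 3) F) (aeval (horizontalLine s) (pderiv 0 f)) *
      (X 0 - (C s.2.1 * X 1 + C s.2.2)) +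
    Polynomial.aeval (X 1 : MvPolynomial (Fin 3) F) (aeval (horizontalLine s) (pderiv 2 f)) *
      (X 2 - C s.1)

/-- The parametrisation `(W, T) ↦ P(W) + T (-∂₂f, 0, ∂₀f)(P(W))` of `tangentRuledPoly f s = 0`,
where `P(W)` runs over `horizontalLine s`. -/
noncomputable def tangentSweep : Fin 3 → Polynomial (Polynomial F) :=
  ![Polynomial.C (Polynomial.C s.2.1 * Polynomial.X + Polynomial.C s.2.2) -
      Polynomial.C (aeval (horizontalLine s) (pderiv 2 f)) * Polynomial.X,
    Polynomial.C Polynomial.X,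
    Polynomial.C (Polynomial.C s.1) +
      Polynomial.C (aeval (horizontalLine s) (pderiv 0 f)) * Polynomial.X]

theorem aeval_tangentSweep (g : MvPolynomial (Fin 3) F) :
    aeval (tangentSweep f s) g =
      (aeval (tangentLine f) g).map (aeval (horizontalLine s) : _ →ₐ[F] _).toRingHom := by
  have h : aeval (tangentSweep f s) =
      (Polynomial.mapAlgHom (aeval (horizontalLine s))).comp (aeval (tangentLine f)) := by
    refine algHom_ext fun i => ?_
    fin_cases i <;> simp [tangentSweep, tangentLine, horizontalLine]
  exact DFunLike.congr_fun h g

theorem aeval_tangentSweep_aeval_X_one (q : Polynomial F) :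
    aeval (tangentSweep f s) (Polynomial.aeval (X 1 : MvPolynomial (Fin 3) F) q) =
      Polynomial.C q := by
  rw [← Polynomial.aeval_algHom_apply, aeval_X]
  change Polynomial.aeval (Polynomial.CAlgHom (R := F) (A := Polynomial F) Polynomial.X) q = _
  rw [Polynomial.aeval_algHom_apply, Polynomial.aeval_X_left_apply]
  rfl

theorem aeval_tangentSweep_tangentRuledPoly :
    aeval (tangentSweep f s) (tangentRuledPoly f s) = 0 := by
  simp only [tangentRuledPoly, map_add, map_mul, map_sub, aeval_tangentSweep_aeval_X_one, aeval_X,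
    algHom_C, Polynomial.algebraMap_apply, Polynomial.algebraMap_eq]
  simp only [tangentSweep, Matrix.cons_val_zero, Matrix.cons_val_one, Matrix.cons_val, map_add,
    map_mul]
  ring

theorem aeval_C_X_X_injective (F : Type*) [Field F] : Function.Injective
    (aeval (R := F) (![Polynomial.C Polynomial.X, Polynomial.X] :
      Fin 2 → Polynomial (Polynomial F))) := by
  have h : (Polynomial.eval₂AlgHom (Polynomial.aeval (X 0 : MvPolynomial (Fin 2) F)) (X 1)
      fun _ => Commute.all _ _).comp (aeval (![Polynomial.C Polynomial.X, Polynomial.X] :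
        Fin 2 → Polynomial (Polynomial F))) = AlgHom.id F (MvPolynomial (Fin 2) F) := by
    refine algHom_ext fun i => ?_
    fin_cases i <;> simp
  exact Function.LeftInverse.injective (DFunLike.congr_fun h)

variable {f s}

theorem aeval_tangentSweep_rename_succ_ne_zero (hs : aeval (horizontalLine s) (pderiv 0 f) ≠ 0)
    {r : MvPolynomial (Fin 2) F} (hr : r ≠ 0) :
    aeval (tangentSweep f s) (rename Fin.succ r) ≠ 0 := by
  have h : (aeval (tangentSweep f s)).comp (rename Fin.succ) =
      ((Polynomial.aeval (tangentSweep f s 2)).restrictScalars F).comp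
        (aeval (![Polynomial.C Polynomial.X, Polynomial.X] :
          Fin 2 → Polynomial (Polynomial F))) := by
    refine algHom_ext fun i => ?_
    fin_cases i <;> simp [tangentSweep]
  have hcomp : aeval (tangentSweep f s) (rename Fin.succ r) =
      (aeval (![Polynomial.C Polynomial.X, Polynomial.X] :
        Fin 2 → Polynomial (Polynomial F)) r).comp (tangentSweep f s 2) :=
    DFunLike.congr_fun h r
  rw [hcomp, Ne, Polynomial.comp_eq_zero_iff]
  rintro (hzero | ⟨-, hconst⟩)
  · exact hr ((map_eq_zero_iff _ (aeval_C_X_X_injective F)).mp hzero)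
  · refine hs ?_
    have hcoeff := congrArg (fun q : Polynomial (Polynomial F) => q.coeff 1) hconst
    simpa only [tangentSweep, Matrix.cons_val, Polynomial.coeff_add, Polynomial.coeff_C_mul,
      Polynomial.coeff_C_succ, Polynomial.coeff_X_one, mul_one, zero_add] using hcoeff

theorem dvd_tangentRuledPoly (hf : Prime f) (hdeg : 0 < f.degreeOf 0) (hinfl : f ∣ inflectionPoly f)
    (hchar : ∀ n : ℕ, 0 < n → n ≤ f.totalDegree → (n : F) ≠ 0)
    (hs : aeval (horizontalLine s) f = 0) (hreg : aeval (horizontalLine s) (pderiv 0 f) ≠ 0) :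
    f ∣ tangentRuledPoly f s := by
  have hsweep : aeval (tangentSweep f s) f = 0 := by
    obtain ⟨k, hk⟩ := C_dvd_aeval_tangentLine hf (not_dvd_pderiv hdeg hchar) hinfl hchar
    rw [aeval_tangentSweep, hk, Polynomial.map_mul, Polynomial.map_C]
    simp [hs]
  by_contra hndvd
  obtain ⟨r, u, v, hr, -, huv⟩ := exists_mul_add_mul_eq_rename_succ hf hdeg hndvd
  refine aeval_tangentSweep_rename_succ_ne_zero hreg hr ?_
  rw [← huv, map_add, map_mul, map_mul, hsweep, aeval_tangentSweep_tangentRuledPoly, zero_mul,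
    zero_mul, add_zero]

theorem aeval_horizontalLine_tangentRuledPoly (t : F × F × F) :
    aeval (horizontalLine t) (tangentRuledPoly f s) =
      aeval (horizontalLine s) (pderiv 0 f) * (Polynomial.C (t.2.1 - s.2.1) * Polynomial.X +
        Polynomial.C (t.2.2 - s.2.2)) +
      aeval (horizontalLine s) (pderiv 2 f) * Polynomial.C (t.1 - s.1) := by
  have hW : ∀ q : Polynomial F, aeval (horizontalLine t)
      (Polynomial.aeval (X 1 : MvPolynomial (Fin 3) F) q) = q := by
    intro q
    rw [← Polynomial.aeval_algHom_apply]
    simp [horizontalLine]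
  simp only [tangentRuledPoly, map_add, map_mul, map_sub, hW, aeval_X, algHom_C,
    Polynomial.algebraMap_eq]
  simp only [horizontalLine, Matrix.cons_val_zero, Matrix.cons_val_one, Matrix.cons_val]
  ring

theorem collinear_horizontalLines (hf : Prime f) (hdeg : 0 < f.degreeOf 0)
    (hinfl : f ∣ inflectionPoly f) (hchar : ∀ n : ℕ, 0 < n → n ≤ f.totalDegree → (n : F) ≠ 0)
    (hs : aeval (horizontalLine s) f = 0) (hreg : aeval (horizontalLine s) (pderiv 0 f) ≠ 0) :
    Collinear F {t : F × F × F | aeval (horizontalLine t) f = 0} := by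
  obtain ⟨k, hk⟩ := dvd_tangentRuledPoly hf hdeg hinfl hchar hs hreg
  set q := aeval (horizontalLine s) (pderiv 0 f)
  have hplane : ∀ t, aeval (horizontalLine t) f = 0 →
      q * (Polynomial.C (t.2.1 - s.2.1) * Polynomial.X + Polynomial.C (t.2.2 - s.2.2)) +
        aeval (horizontalLine s) (pderiv 2 f) * Polynomial.C (t.1 - s.1) = 0 := fun t ht => by
    rw [← aeval_horizontalLine_tangentRuledPoly, hk, map_mul, ht, zero_mul]
  have hlin : ∀ a b : F, Polynomial.C a * Polynomial.X + Polynomial.C b = 0 → a = 0 ∧ b = 0 :=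
    fun a b h => ⟨by simpa using congrArg (fun q : Polynomial F => q.coeff 1) h,
      by simpa using congrArg (fun q : Polynomial F => q.coeff 0) h⟩
  -- Eliminating `∂₂f` between the equations of two lines leaves a multiple of `q ≠ 0`.
  have hprop : ∀ t u, aeval (horizontalLine t) f = 0 → aeval (horizontalLine u) f = 0 →
      (u.1 - s.1) * (t.2.1 - s.2.1) - (t.1 - s.1) * (u.2.1 - s.2.1) = 0 ∧
      (u.1 - s.1) * (t.2.2 - s.2.2) - (t.1 - s.1) * (u.2.2 - s.2.2) = 0 := by
    intro t u ht hu
    refine hlin _ _ ((mul_eq_zero.mp ?_).resolve_left hreg)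
    simp only [map_sub, map_mul]
    have ht := hplane t ht
    have hu := hplane u hu
    simp only [map_sub] at ht hu
    linear_combination (Polynomial.C u.1 - Polynomial.C s.1) * ht -
      (Polynomial.C t.1 - Polynomial.C s.1) * hu
  rw [collinear_iff_of_mem (p₀ := s) hs]
  by_cases h : ∃ u, aeval (horizontalLine u) f = 0 ∧ u.1 ≠ s.1
  · obtain ⟨u, hu, hne⟩ := h
    refine ⟨u -ᵥ s, fun t ht => ⟨(t.1 - s.1) / (u.1 - s.1), ?_⟩⟩
    have hne : u.1 - s.1 ≠ 0 := sub_ne_zero.mpr hne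
    obtain ⟨hy, hz⟩ := hprop t u ht hu
    refine Prod.ext ?_ (Prod.ext ?_ ?_) <;>
      simp only [vsub_eq_sub, vadd_eq_add, Prod.fst_add, Prod.snd_add, Prod.smul_fst, Prod.smul_snd,
        Prod.fst_sub, Prod.snd_sub, smul_eq_mul] <;>
      field_simp
    · ring
    · linear_combination hy
    · linear_combination hz
  · push Not at h
    refine ⟨0, fun t ht => ⟨0, ?_⟩⟩
    have hq := hplane t ht
    rw [h t ht, sub_self, map_zero, mul_zero, add_zero] at hq
    obtain ⟨hy, hz⟩ := hlin _ _ ((mul_eq_zero.mp hq).resolve_left hreg)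
    rw [zero_smul, zero_vadd]
    exact Prod.ext (h t ht) (Prod.ext (sub_eq_zero.mp hy) (sub_eq_zero.mp hz))

end TangentPlane

section Incidences

variable {F : Type*} [Field F]

/-- No line contains more than `k` points of `S`. -/
def CollinearCardLE (K : Type*) {V : Type*} [DivisionRing K] [AddCommGroup V] [Module K V]
    (S : Finset V) (k : ℕ) : Prop :=
  ∀ R ⊆ S, Collinear K (R : Set V) → #R ≤ k

theorem CollinearCardLE.mono {K V : Type*} [DivisionRing K] [AddCommGroup V] [Module K V]
    {R S : Finset V} {k : ℕ} (hS : CollinearCardLE K S k) (hRS : R ⊆ S) : CollinearCardLE K R k :=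
  fun U hU => hS U (hU.trans hRS)

/-- `horizontalLine s` intersects `verticalLine t`, at a point with `W = t.1` and `Z = s.1`. -/
def Meets (s t : F × F × F) : Prop := s.2.1 * t.1 + s.2.2 = t.2.1 * s.1 + t.2.2

instance [DecidableEq F] (s t : F × F × F) : Decidable (Meets s t) :=
  inferInstanceAs (Decidable (_ = _))

theorem meets_comm {s t : F × F × F} : Meets s t ↔ Meets t s := eq_comm

theorem Meets.eval_eq {s t : F × F × F} (h : Meets s t) (f : MvPolynomial (Fin 3) F) :
    (aeval (horizontalLine s) f).eval t.1 = (aeval (verticalLine t) f).eval s.1 := by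
  have hcomp : (Polynomial.aeval t.1).comp (aeval (horizontalLine s)) =
      (Polynomial.aeval s.1).comp (aeval (verticalLine t)) := by
    refine algHom_ext fun i => ?_
    fin_cases i
    · simpa [horizontalLine, verticalLine, Meets] using h
    · simp [horizontalLine, verticalLine]
    · simp [horizontalLine, verticalLine]
  exact DFunLike.congr_fun hcomp f

theorem natDegree_horizontalLine_le (s : F × F × F) (i : Fin 3) :
    (horizontalLine s i).natDegree ≤ 1 := by
  fin_cases i
  · exact Polynomial.natDegree_linear_le
  · exact Polynomial.natDegree_X_le
  · exact (Polynomial.natDegree_C _).trans_le zero_le_one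

theorem natDegree_aeval_horizontalLine_le (s : F × F × F) (f : MvPolynomial (Fin 3) F) :
    (aeval (horizontalLine s) f).natDegree ≤ f.totalDegree :=
  natDegree_aeval_le f (natDegree_horizontalLine_le s)

theorem natDegree_aeval_verticalLine_le (t : F × F × F) (f : MvPolynomial (Fin 3) F) :
    (aeval (verticalLine t) f).natDegree ≤ f.totalDegree := by
  refine natDegree_aeval_le f fun i => ?_
  fin_cases i
  · exact Polynomial.natDegree_linear_le
  · exact (Polynomial.natDegree_C _).trans_le zero_le_one
  · exact Polynomial.natDegree_X_le

variable [DecidableEq F]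

/-- The number of pairs in `S × T` whose lines meet. -/
def incidences (S T : Finset (F × F × F)) : ℕ := ∑ t ∈ T, #(S.bipartiteBelow Meets t)

theorem incidences_comm (S T : Finset (F × F × F)) : incidences S T = incidences T S := by
  rw [incidences, ← sum_card_bipartiteAbove_eq_sum_card_bipartiteBelow]
  exact sum_congr rfl fun s _ => congrArg card (filter_congr fun t _ => meets_comm)

theorem incidences_union_le (S T U : Finset (F × F × F)) :
    incidences S (T ∪ U) ≤ incidences S T + incidences S U :=
  (Nat.le_add_right _ _).trans_eq (sum_union_inter)

variable {S T : Finset (F × F × F)} {f : MvPolynomial (Fin 3) F} {k : ℕ}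

theorem incidences_le_of_aeval_eq_zero (hT : Set.InjOn Prod.fst (T : Set (F × F × F)))
    (hSf : ∀ s ∈ S, aeval (horizontalLine s) f ≠ 0) (hTf : ∀ t ∈ T, aeval (verticalLine t) f = 0) :
    incidences S T ≤ f.totalDegree * #S := by
  rw [incidences_comm, mul_comm]
  refine sum_le_card_nsmul S _ _ fun s hs => ?_
  refine (card_le_natDegree_of_forall_eval_eq_zero (hSf s hs) (φ := Prod.fst)
    (hT.mono (filter_subset _ _)) fun t ht => ?_).trans (natDegree_aeval_horizontalLine_le s f)
  obtain ⟨ht, hmeets⟩ := mem_filter.mp ht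
  rw [(meets_comm.mp hmeets).eval_eq, hTf t ht, Polynomial.eval_zero]

theorem card_bipartiteBelow_meets_le (hf : Prime f) (hdeg : 0 < f.degreeOf 0)
    (hinfl : f ∣ inflectionPoly f) (hchar : ∀ n : ℕ, 0 < n → n ≤ f.totalDegree → (n : F) ≠ 0)
    (hS : Set.InjOn Prod.fst (S : Set (F × F × F))) (hk : CollinearCardLE F S k)
    (hSf : ∀ s ∈ S, aeval (horizontalLine s) f = 0) {t : F × F × F}
    (ht : aeval (verticalLine t) (pderiv 0 f) ≠ 0) :
    #(S.bipartiteBelow Meets t) ≤ f.totalDegree + k := by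
  let IsSingular (s : F × F × F) : Prop := (aeval (verticalLine t) (pderiv 0 f)).eval s.1 = 0
  rw [← card_filter_add_card_filter_not (s := S.bipartiteBelow Meets t) IsSingular]
  refine add_le_add ?_ (hk _ ((filter_subset _ _).trans (filter_subset _ _)) ?_)
  · refine (card_le_natDegree_of_forall_eval_eq_zero ht (φ := Prod.fst)
      (hS.mono ((filter_subset _ _).trans (filter_subset _ _)))
      fun s hs => (mem_filter.mp hs).2).trans ((natDegree_aeval_verticalLine_le _ _).trans ?_)
    exact (totalDegree_pderiv_le 0 f).trans (Nat.sub_le _ _)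
  · rcases eq_empty_or_nonempty {s ∈ S.bipartiteBelow Meets t | ¬ IsSingular s} with
      hempty | ⟨s, hs⟩
    · rw [hempty, coe_empty]
      exact collinear_empty _ _
    obtain ⟨hs, hregular⟩ := mem_filter.mp hs
    obtain ⟨hs, hmeets⟩ := mem_filter.mp hs
    refine (collinear_horizontalLines hf hdeg hinfl hchar (hSf s hs) fun h => ?_).subset
      fun u hu => hSf u (filter_subset _ _ (filter_subset _ _ hu))
    refine hregular ?_
    change Polynomial.eval _ _ = 0
    rw [← hmeets.eval_eq, h, Polynomial.eval_zero]

theorem incidences_le_of_prime (hf : Prime f) (hdeg : 0 < f.degreeOf 0)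
    (hinfl : f ∣ inflectionPoly f) (hchar : ∀ n : ℕ, 0 < n → n ≤ f.totalDegree → (n : F) ≠ 0)
    (hS : Set.InjOn Prod.fst (S : Set (F × F × F))) (hk : CollinearCardLE F S k)
    (hT : Set.InjOn Prod.fst (T : Set (F × F × F))) (hTf : ∀ t ∈ T, aeval (verticalLine t) f = 0)
    (hTd : ∀ t ∈ T, aeval (verticalLine t) (pderiv 0 f) ≠ 0) :
    incidences S T ≤ f.totalDegree * #S + #T * (f.totalDegree + k) := by
  classical
  let OnSurface (s : F × F × F) : Prop := aeval (horizontalLine s) f = 0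
  have hsplit : incidences S T =
      incidences {s ∈ S | ¬ OnSurface s} T + incidences {s ∈ S | OnSurface s} T := by
    simp only [incidences, ← sum_add_distrib]
    refine sum_congr rfl fun t _ => ?_
    rw [add_comm, ← card_filter_add_card_filter_not (s := S.bipartiteBelow Meets t) OnSurface]
    simp only [bipartiteBelow, filter_filter, and_comm]
  rw [hsplit]
  refine add_le_add ?_ (sum_le_card_nsmul T _ _ fun t ht => ?_)
  · refine (incidences_le_of_aeval_eq_zero hT (fun s hs => (mem_filter.mp hs).2) hTf).trans ?_
    exact Nat.mul_le_mul_left _ (card_filter_le _ _)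
  · exact card_bipartiteBelow_meets_le hf hdeg hinfl hchar (hS.mono (filter_subset _ _))
      (hk.mono (filter_subset _ _)) (fun s hs => (mem_filter.mp hs).2) (hTd t ht)

theorem exists_incidences_le_of_prime (hf : Prime f)
    (hchar : ∀ n : ℕ, 0 < n → n ≤ f.totalDegree → (n : F) ≠ 0)
    (hS : Set.InjOn Prod.fst (S : Set (F × F × F))) (hk : CollinearCardLE F S k)
    (hT : Set.InjOn Prod.fst (T : Set (F × F × F))) (hTf : ∀ t ∈ T, aeval (verticalLine t) f = 0) :
    ∃ T' ⊆ T, #(T \ T') ≤ 16 * f.totalDegree ^ 2 ∧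
      incidences S T' ≤ f.totalDegree * #S + #T' * (f.totalDegree + k) := by
  classical
  suffices h : #T ≤ 16 * f.totalDegree ^ 2 ∨ 0 < f.degreeOf 0 ∧ f ∣ inflectionPoly f by
    rcases h with hcard | ⟨hdeg, hinfl⟩
    · exact ⟨∅, empty_subset _, by rwa [sdiff_empty], by simp [incidences]⟩
    refine ⟨{t ∈ T | aeval (verticalLine t) (pderiv 0 f) ≠ 0}, filter_subset _ _, ?_,
      incidences_le_of_prime hf hdeg hinfl hchar hS hk (hT.mono (filter_subset _ _))
        (fun t ht => hTf t (filter_subset _ _ ht)) fun t ht => (mem_filter.mp ht).2⟩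
    rw [← filter_not]
    refine (card_verticalLines_le_of_prime hf hdeg (not_dvd_pderiv hdeg hchar)
      (hT.mono (filter_subset _ _)) (fun t ht => hTf t (filter_subset _ _ ht))
      fun t ht => not_not.mp (mem_filter.mp ht).2).trans ?_
    have := totalDegree_pderiv_le 0 f
    calc (f.totalDegree + (pderiv 0 f).totalDegree) ^ 2 ≤ (4 * f.totalDegree) ^ 2 := by
          gcongr; omega
      _ = 16 * f.totalDegree ^ 2 := by ring
  rcases Nat.eq_zero_or_pos (f.degreeOf 0) with hdeg | hdeg
  · left
    have := card_verticalLines_le_of_degreeOf_eq_zero hf.ne_zero hdeg hT hTf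
    nlinarith [Nat.le_self_pow two_ne_zero f.totalDegree]
  by_cases hinfl : f ∣ inflectionPoly f
  · exact Or.inr ⟨hdeg, hinfl⟩
  left
  refine (card_verticalLines_le_of_prime hf hdeg hinfl hT hTf
    fun t ht => aeval_verticalLine_inflectionPoly (hTf t ht)).trans ?_
  have := totalDegree_inflectionPoly_le f
  calc (f.totalDegree + (inflectionPoly f).totalDegree) ^ 2 ≤ (4 * f.totalDegree) ^ 2 := by
        gcongr; omega
    _ = 16 * f.totalDegree ^ 2 := by ring

theorem exists_incidences_le (hf : f ≠ 0)
    (hchar : ∀ n : ℕ, 0 < n → n ≤ f.totalDegree → (n : F) ≠ 0)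
    (hS : Set.InjOn Prod.fst (S : Set (F × F × F))) (hk : CollinearCardLE F S k)
    (hT : Set.InjOn Prod.fst (T : Set (F × F × F))) (hTf : ∀ t ∈ T, aeval (verticalLine t) f = 0) :
    ∃ T' ⊆ T, #(T \ T') ≤ 16 * f.totalDegree ^ 2 ∧
      incidences S T' ≤ f.totalDegree * #S + #T' * (f.totalDegree + k) := by
  classical
  induction f using UniqueFactorizationMonoid.induction_on_prime generalizing T with
  | h₁ => exact absurd rfl hf
  | h₂ f hunit =>
    have hempty : T = ∅ := eq_empty_of_forall_notMem fun t ht =>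
      (hunit.map (aeval (verticalLine t))).ne_zero (hTf t ht)
    exact ⟨∅, empty_subset _, by simp [hempty], by simp [incidences]⟩
  | h₃ f q hf0 hq ih =>
    rw [totalDegree_mul_of_isDomain hq.ne_zero hf0] at hchar ⊢
    obtain ⟨U, hUT, hUcard, hUinc⟩ := exists_incidences_le_of_prime
      (T := {t ∈ T | aeval (verticalLine t) q = 0}) hq
      (fun n hn hle => hchar n hn (hle.trans (Nat.le_add_right _ _))) hS hk
      (hT.mono (filter_subset _ _)) fun t ht => (mem_filter.mp ht).2
    obtain ⟨V, hVT, hVcard, hVinc⟩ := ih (T := {t ∈ T | aeval (verticalLine t) f = 0} \ U) hf0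
      (fun n hn hle => hchar n hn (hle.trans (Nat.le_add_left _ _)))
      (hT.mono (sdiff_subset.trans (filter_subset _ _)))
      fun t ht => (mem_filter.mp (mem_sdiff.mp ht).1).2
    have hdisj : Disjoint U V := disjoint_sdiff.mono_right hVT
    refine ⟨U ∪ V, union_subset (hUT.trans (filter_subset _ _))
      (hVT.trans (sdiff_subset.trans (filter_subset _ _))), ?_, ?_⟩
    · have hsub : T \ (U ∪ V) ⊆ ({t ∈ T | aeval (verticalLine t) q = 0} \ U) ∪
          (({t ∈ T | aeval (verticalLine t) f = 0} \ U) \ V) := by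
        intro t ht
        have hzero := fun h => hTf t h
        simp only [map_mul, mul_eq_zero] at hzero
        simp only [mem_sdiff, mem_union, not_or, mem_filter] at ht ⊢
        tauto
      have hcard := (card_le_card hsub).trans (card_union_le _ _)
      nlinarith
    · rw [card_union_of_disjoint hdisj]
      refine (incidences_union_le S U V).trans ?_
      nlinarith [Nat.zero_le (#U * f.totalDegree), Nat.zero_le (#V * q.totalDegree)]

end Incidences

section Sampling

variable {α β : Type*} (r : α → β → Prop) [∀ a b, Decidable (r a b)]

/-- The number of `r`-related pairs in `U × T`, where each element of `T` contributes at most `m`.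
It is the potential function of the greedy sampling argument. -/
def truncatedCount (T : Finset β) (m : ℕ) (U : Finset α) : ℕ :=
  ∑ t ∈ T, min m #(U.bipartiteBelow r t)

theorem truncatedCount_insert [DecidableEq α] (T : Finset β) (m : ℕ) {U : Finset α} {s : α}
    (hs : s ∉ U) : truncatedCount r T m (insert s U) =
      truncatedCount r T m U + #{t ∈ T | r s t ∧ #(U.bipartiteBelow r t) < m} := by
  rw [truncatedCount, truncatedCount, card_filter, ← sum_add_distrib]
  refine sum_congr rfl fun t _ => ?_
  rw [bipartiteBelow, filter_insert]
  by_cases hst : r s t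
  · rw [if_pos hst, card_insert_of_notMem fun h => hs (filter_subset _ _ h)]
    simp only [hst, true_and, bipartiteBelow]
    split_ifs <;> omega
  · simp only [hst, false_and, if_false, bipartiteBelow, add_zero]

variable {r} {S : Finset α} {T : Finset β} {Q m : ℕ}

-- Averaging over `S \ U`: an unsaturated `t` is related to at least `Q - m ≥ Q / 2` elements of it.
theorem exists_gain_of_unsaturated [DecidableEq α] (hm : 2 * m ≤ Q)
    (hT : ∀ t ∈ T, Q ≤ #(S.bipartiteBelow r t)) {U : Finset α}
    (hU : #T < 2 * #{t ∈ T | #(U.bipartiteBelow r t) < m}) :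
    ∃ s ∈ S \ U, #T * Q ≤ 4 * #S * #{t ∈ T | r s t ∧ #(U.bipartiteBelow r t) < m} := by
  set N := {t ∈ T | #(U.bipartiteBelow r t) < m} with hN
  have hgain : ∀ s, {t ∈ T | r s t ∧ #(U.bipartiteBelow r t) < m} = N.bipartiteAbove r s := by
    intro s
    rw [bipartiteAbove, hN, filter_filter]
    exact filter_congr fun t _ => and_comm
  simp only [hgain]
  by_contra! hno
  have hdeg : ∀ t ∈ N, Q ≤ 2 * #((S \ U).bipartiteBelow r t) := by
    intro t ht
    obtain ⟨htT, htU⟩ := mem_filter.mp ht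
    have hsub : S.bipartiteBelow r t ⊆ (S \ U).bipartiteBelow r t ∪ U.bipartiteBelow r t := by
      rw [bipartiteBelow, bipartiteBelow, bipartiteBelow, ← filter_union, sdiff_union_self_eq_union]
      exact filter_subset_filter _ subset_union_left
    have hcard := (card_le_card hsub).trans (card_union_le _ _)
    have hle := hT t htT
    omega
  have hN0 : N.Nonempty := card_pos.mp (by omega)
  have hSU : (S \ U).Nonempty := by
    obtain ⟨t, ht⟩ := hN0
    by_contra! hempty
    have hQ := hdeg t ht
    have htU := (mem_filter.mp ht).2
    rw [hempty, bipartiteBelow, filter_empty, card_empty] at hQ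
    omega
  refine lt_irrefl (#S * (#T * Q)) ?_
  calc #S * (#T * Q) ≤ #S * (2 * #N * Q) := by gcongr
    _ = #S * (2 * (#N * Q)) := by rw [mul_assoc 2]
    _ ≤ #S * (2 * ∑ t ∈ N, 2 * #((S \ U).bipartiteBelow r t)) := by
        gcongr
        exact card_nsmul_le_sum N _ _ hdeg
    _ = ∑ s ∈ S \ U, 4 * #S * #(N.bipartiteAbove r s) := by
        rw [← mul_sum, ← mul_sum, sum_card_bipartiteAbove_eq_sum_card_bipartiteBelow]
        ring
    _ < ∑ _ ∈ S \ U, #T * Q := sum_lt_sum_of_nonempty hSU hno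
    _ ≤ #S * (#T * Q) := by
        rw [sum_const, smul_eq_mul]
        gcongr
        exact sdiff_subset

theorem exists_subset_forall_le_card_bipartiteBelow (hm : 2 * m ≤ Q)
    (hT : ∀ t ∈ T, Q ≤ #(S.bipartiteBelow r t)) :
    ∃ U ⊆ S, #U * Q ≤ 4 * m * #S ∧ #T ≤ 2 * #{t ∈ T | m ≤ #(U.bipartiteBelow r t)} := by
  classical
  rcases T.eq_empty_or_nonempty with rfl | hne
  · exact ⟨∅, empty_subset _, by simp, by simp⟩
  obtain ⟨U, hU, hmax⟩ := exists_max_image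
    {U ∈ S.powerset | #U * (#T * Q) ≤ 4 * #S * truncatedCount r T m U} card ⟨∅, by simp⟩
  rw [mem_filter, mem_powerset] at hU
  obtain ⟨hUS, hUcount⟩ := hU
  refine ⟨U, hUS, ?_, ?_⟩
  · have hcount : truncatedCount r T m U ≤ #T * m :=
      sum_le_card_nsmul T _ _ fun t _ => min_le_left _ _
    refine Nat.le_of_mul_le_mul_left ?_ hne.card_pos
    calc #T * (#U * Q) = #U * (#T * Q) := by ring
      _ ≤ 4 * #S * (#T * m) := hUcount.trans (Nat.mul_le_mul_left _ hcount)
      _ = #T * (4 * m * #S) := by ring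
  by_contra! hlt
  have hsplit := card_filter_add_card_filter_not (s := T) fun t => #(U.bipartiteBelow r t) < m
  simp only [not_lt] at hsplit
  obtain ⟨s, hs, hgain⟩ := exists_gain_of_unsaturated hm hT (U := U) (by omega)
  obtain ⟨hsS, hsU⟩ := mem_sdiff.mp hs
  have hle := hmax (insert s U) <| by
    rw [mem_filter, mem_powerset, truncatedCount_insert r T m hsU, card_insert_of_notMem hsU,
      add_mul, mul_add, one_mul]
    exact ⟨insert_subset hsS hUS, add_le_add hUcount hgain⟩
  rw [card_insert_of_notMem hsU] at hle
  omega

end Sampling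

section PolynomialMethod

theorem finrank_restrictDegree (σ K : Type*) [Fintype σ] [Field K] (e : ℕ) :
    Module.finrank K (restrictDegree σ K e) = (e + 1) ^ Fintype.card σ := by
  have e₁ : {m : σ →₀ ℕ | ∀ i, m i ≤ e} ≃ (σ → {n : ℕ // n ≤ e}) :=
    ((Finsupp.equivFunOnFinite (α := σ) (M := ℕ)).subtypeEquiv (p := fun m => ∀ i, m i ≤ e)
      (q := fun m => ∀ i, m i ≤ e) fun _ => Iff.rfl).trans
      (Equiv.subtypePiEquivPi (p := fun _ n => n ≤ e))
  have hcard : Nat.card {n : ℕ // n ≤ e} = e + 1 := by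
    rw [Nat.subtype_card (Iic e) fun n => mem_Iic, Nat.card_Iic]
  rw [restrictDegree, Module.finrank_eq_nat_card_basis (basisRestrictSupport K _),
    Nat.card_congr e₁, Nat.card_fun, hcard, Nat.card_eq_fintype_card]

theorem totalDegree_le_of_mem_restrictDegree {σ K : Type*} [Fintype σ] [Field K] {e : ℕ}
    {f : MvPolynomial σ K} (hf : f ∈ restrictDegree σ K e) :
    f.totalDegree ≤ Fintype.card σ * e := by
  refine Finset.sup_le fun m hm => ?_
  rw [Finsupp.sum_fintype _ _ fun _ => rfl]
  exact sum_le_card_nsmul _ _ _ fun i _ => (mem_restrictDegree _ f e).mp hf m hm i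

theorem exists_forall_aeval_eq_zero {ι σ K : Type*} [Fintype σ] [Field K]
    (v : ι → σ → Polynomial K) (hv : ∀ s i, (v s i).natDegree ≤ 1) (S : Finset ι) {e : ℕ}
    (hcard : #S * (Fintype.card σ * e + 1) < (e + 1) ^ Fintype.card σ) :
    ∃ f : MvPolynomial σ K, f ≠ 0 ∧ f.totalDegree ≤ Fintype.card σ * e ∧
      ∀ s ∈ S, aeval (v s) f = 0 := by
  set d := Fintype.card σ * e
  let coeffs : restrictDegree σ K e →ₗ[K] S × Fin (d + 1) → K :=
    LinearMap.pi fun q => (Polynomial.lcoeff K q.2) ∘ₗ (aeval (v q.1)).toLinearMap ∘ₗ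
      Submodule.subtype _
  have : Module.Finite K (restrictDegree σ K e) := Module.finite_of_finrank_pos <| by
    rw [finrank_restrictDegree]
    positivity
  have hker : LinearMap.ker coeffs ≠ ⊥ := by
    apply LinearMap.ker_ne_bot_of_finrank_lt
    rw [Module.finrank_fintype_fun_eq_card, finrank_restrictDegree]
    simpa using hcard
  obtain ⟨⟨f, hf⟩, hzero, hne⟩ := Submodule.exists_mem_ne_zero_of_ne_bot hker
  have hdeg := totalDegree_le_of_mem_restrictDegree hf
  refine ⟨f, fun h => hne (Subtype.ext h), hdeg, fun s hs => Polynomial.ext fun j => ?_⟩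
  rcases lt_or_ge j (d + 1) with hj | hj
  · exact congrFun (LinearMap.mem_ker.mp hzero) (⟨s, hs⟩, ⟨j, hj⟩)
  · exact Polynomial.coeff_eq_zero_of_natDegree_lt
      ((natDegree_aeval_le f (hv s)).trans_lt (hdeg.trans_lt hj))

end PolynomialMethod

section IncidenceBound

variable {F : Type*} [Field F] [DecidableEq F] {S T : Finset (F × F × F)} {k Q p N : ℕ}

theorem exists_surface (hS : Set.InjOn Prod.fst (S : Set (F × F × F))) {e : ℕ}
    (he : 2 * (3 * e + 1) ≤ Q) (heS : 36 * #S < (e + 1) * Q)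
    (hT : ∀ t ∈ T, Q ≤ #(S.bipartiteBelow Meets t)) :
    ∃ f : MvPolynomial (Fin 3) F, f ≠ 0 ∧ f.totalDegree ≤ 3 * e ∧ ∃ T' ⊆ T, #T ≤ 2 * #T' ∧
      ∀ t ∈ T', aeval (verticalLine t) f = 0 := by
  obtain ⟨U, hUS, hUcard, hTcard⟩ := exists_subset_forall_le_card_bipartiteBelow he hT
  have hparams : #U * (Fintype.card (Fin 3) * e + 1) < (e + 1) ^ Fintype.card (Fin 3) := by
    rw [Fintype.card_fin]
    refine Nat.lt_of_mul_lt_mul_right (a := 9 * Q) ?_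
    calc #U * (3 * e + 1) * (9 * Q) = 9 * (3 * e + 1) * (#U * Q) := by ring
      _ ≤ 9 * (3 * e + 1) * (4 * (3 * e + 1) * #S) := by gcongr
      _ = (3 * e + 1) ^ 2 * (36 * #S) := by ring
      _ < (3 * e + 1) ^ 2 * ((e + 1) * Q) := by gcongr
      _ ≤ (3 * (e + 1)) ^ 2 * ((e + 1) * Q) := by gcongr; omega
      _ = (e + 1) ^ 3 * (9 * Q) := by ring
  obtain ⟨f, hf, hfdeg, hfU⟩ :=
    exists_forall_aeval_eq_zero horizontalLine natDegree_horizontalLine_le U hparams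
  rw [Fintype.card_fin] at hfdeg
  refine ⟨f, hf, hfdeg, _, filter_subset _ T, hTcard, fun t ht => ?_⟩
  by_contra hne
  have hroots : #(U.bipartiteBelow Meets t) ≤ f.totalDegree :=
    (card_le_natDegree_of_forall_eval_eq_zero hne (φ := Prod.fst)
      (hS.mono ((filter_subset _ _).trans hUS)) fun s hs => by
        obtain ⟨hsU, hmeets⟩ := mem_filter.mp hs
        rw [← hmeets.eval_eq, hfU s hsU, Polynomial.eval_zero]).trans
      (natDegree_aeval_verticalLine_le t f)
  have hrich := (mem_filter.mp ht).2
  omega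

theorem exists_surface_degree {n : ℕ} (hn : Q ≤ n) (hQ : 1000000 * n ≤ Q ^ 2)
    (hp : 108 * n < p * Q) :
    ∃ e, 36 * n < (e + 1) * Q ∧ 2 * (3 * e + 1) ≤ Q ∧ 3 * e < p ∧ 15 * e ≤ Q ∧
      576 * e ^ 2 ≤ n := by
  have hQpos : 0 < Q := pos_of_mul_pos_right (Nat.zero_lt_of_lt hp) p.zero_le
  have hQlarge : 1000000 ≤ Q := Nat.le_of_mul_le_mul_right (by nlinarith) hQpos
  have hmul : 36 * n / Q * Q ≤ 36 * n := Nat.div_mul_le_self _ _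
  generalize he : 36 * n / Q = e at hmul
  have heQ : 27000 * e ≤ Q := Nat.le_of_mul_le_mul_right (by nlinarith) hQpos
  refine ⟨e, ?_, by omega, Nat.lt_of_mul_lt_mul_right (a := Q) ?_, by omega, ?_⟩
  · rw [← he, mul_comm (_ + 1)]
    exact Nat.lt_mul_div_succ _ hQpos
  · linarith
  · nlinarith

theorem exists_card_bipartiteBelow_meets_le (hchar : ∀ n : ℕ, 0 < n → n < p → (n : F) ≠ 0)
    (hS : Set.InjOn Prod.fst (S : Set (F × F × F))) (hk : CollinearCardLE F S k)
    (hT : Set.InjOn Prod.fst (T : Set (F × F × F))) (hQ : 1000000 * #S ≤ Q ^ 2)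
    (hp : 108 * #S < p * Q) (hST : #S ≤ #T) (hne : T.Nonempty) :
    ∃ t ∈ T, #(S.bipartiteBelow Meets t) ≤ Q + k := by
  by_contra! hrich
  have hQS : Q ≤ #S := by
    obtain ⟨t, ht⟩ := hne
    have hle : #(S.bipartiteBelow Meets t) ≤ #S := card_filter_le _ _
    exact (Nat.le_add_right Q k).trans ((hrich t ht).le.trans hle)
  obtain ⟨e, heS, heQ, hep, heQ', heS'⟩ := exists_surface_degree hQS hQ hp
  obtain ⟨f, hf, hfdeg, T', hT', hTcard, hfT'⟩ := exists_surface hS heQ heS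
    fun t ht => (Nat.le_add_right Q k).trans (hrich t ht).le
  obtain ⟨U, hUT', hUcard, hUinc⟩ := exists_incidences_le hf
    (fun n hn hle => hchar n hn (by omega)) hS hk (hT.mono hT') hfT'
  have hsingular : #(T' \ U) ≤ 144 * e ^ 2 := hUcard.trans <|
    calc 16 * f.totalDegree ^ 2 ≤ 16 * (3 * e) ^ 2 := by gcongr
      _ = 144 * e ^ 2 := by ring
  have hsplit : #(T' \ U) + #U = #T' := card_sdiff_add_card_eq_card hUT'
  have hTpos := hne.card_pos
  have hbound : #U * (Q + k + 1) ≤ #U * (15 * e + k) :=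
    calc #U * (Q + k + 1) ≤ incidences S U := by
          rw [← smul_eq_mul]
          exact card_nsmul_le_sum U _ _ fun t ht => hrich t (hT' (hUT' ht))
      _ ≤ 3 * e * (4 * #U) + #U * (3 * e + k) := by
          refine hUinc.trans ?_
          gcongr
          omega
      _ = #U * (15 * e + k) := by ring
  have hle := Nat.le_of_mul_le_mul_left hbound (by omega)
  omega

theorem incidences_erase_add (S : Finset (F × F × F)) {t : F × F × F} (ht : t ∈ T) :
    incidences S (T.erase t) + #(S.bipartiteBelow Meets t) = incidences S T :=
  sum_erase_add T _ ht

theorem incidences_le (hchar : ∀ n : ℕ, 0 < n → n < p → (n : F) ≠ 0)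
    (hS : Set.InjOn Prod.fst (S : Set (F × F × F))) (hT : Set.InjOn Prod.fst (T : Set (F × F × F)))
    (hkS : CollinearCardLE F S k) (hkT : CollinearCardLE F T k)
    (hQ : 1000000 * N ≤ Q ^ 2) (hp : 108 * N < p * Q) (hN : #S + #T ≤ N) :
    incidences S T ≤ (Q + k) * (#S + #T) := by
  induction hn : #S + #T using Nat.strong_induction_on generalizing S T with
  | _ n ih =>
    wlog hST : #S ≤ #T generalizing S T
    · rw [incidences_comm]
      exact this hT hS hkT hkS (by omega) (by omega) (by omega)
    rcases T.eq_empty_or_nonempty with rfl | hne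
    · simp [incidences]
    obtain ⟨t, ht, hpoor⟩ := exists_card_bipartiteBelow_meets_le (Q := Q) hchar hS hkS hT
      (by omega) (by omega) hST hne
    have hcard := card_erase_add_one ht
    have hle := ih (#S + #(T.erase t)) (by omega) hS (hT.mono (erase_subset t T)) hkS
      (hkT.mono (erase_subset t T)) (by omega) rfl
    rw [← incidences_erase_add S ht, ← hn, ← hcard, ← add_assoc, mul_add_one]
    exact add_le_add hle hpoor

end IncidenceBound

section GenericProjection

theorem injOn_or_forall_eq_of_collinear {K V : Type*} [Field K] [AddCommGroup V] [Module K V]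
    {S : Set V} (hS : Collinear K S) (φ : Module.Dual K V) :
    Set.InjOn φ S ∨ ∀ v ∈ S, ∀ w ∈ S, φ v = φ w := by
  obtain ⟨p₀, d, hd⟩ := (collinear_iff_exists_forall_eq_smul_vadd S).mp hS
  rcases eq_or_ne (φ d) 0 with hφ | hφ
  · right
    intro v hv w hw
    obtain ⟨r, rfl⟩ := hd v hv
    obtain ⟨s, rfl⟩ := hd w hw
    simp [hφ]
  · left
    intro v hv w hw hvw
    obtain ⟨r, rfl⟩ := hd v hv
    obtain ⟨s, rfl⟩ := hd w hw
    simp only [vadd_eq_add, map_add, map_smul, smul_eq_mul, add_left_inj] at hvw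
    rw [mul_right_cancel₀ hφ hvw]

theorem collinear_of_collinear_perspective {K V : Type*} [Field K] [AddCommGroup V] [Module K V]
    {φ : Module.Dual K V} {S : Set V} (hφ : ∀ v ∈ S, 1 + φ v ≠ 0)
    (hS : Collinear K ((fun v => (1 + φ v)⁻¹ • v) '' S)) : Collinear K S := by
  rcases S.eq_empty_or_nonempty with rfl | ⟨v₀, hv₀⟩
  · exact collinear_empty K V
  obtain ⟨d, hd⟩ := (collinear_iff_of_mem (Set.mem_image_of_mem _ hv₀)).mp hS
  refine (collinear_iff_of_mem hv₀).mpr ⟨d + φ d • v₀, fun v hv => ?_⟩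
  obtain ⟨r, hr⟩ := hd _ (Set.mem_image_of_mem _ hv)
  simp only [vadd_eq_add] at hr
  have hw : (1 + φ v)⁻¹ = (1 + φ v₀)⁻¹ - r * φ d := by
    have hφr := congrArg φ hr
    simp only [map_add, map_smul, smul_eq_mul] at hφr
    have h := inv_mul_cancel₀ (hφ v hv)
    have h₀ := inv_mul_cancel₀ (hφ v₀ hv₀)
    linear_combination h - h₀ - hφr
  refine ⟨(1 + φ v) * r, ?_⟩
  calc v = (1 + φ v) • (1 + φ v)⁻¹ • v := (smul_inv_smul₀ (hφ v hv) v).symm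
    _ = (1 + φ v) • (r • d + ((1 + φ v)⁻¹ + r * φ d) • v₀) := by rw [hr, hw, sub_add_cancel]
    _ = ((1 + φ v) * r) • (d + φ d • v₀) + ((1 + φ v) * (1 + φ v)⁻¹) • v₀ := by module
    _ = ((1 + φ v) * r) • (d + φ d • v₀) +ᵥ v₀ := by
        rw [mul_inv_cancel₀ (hφ v hv), one_smul, vadd_eq_add]

variable {F K : Type*} [Field F] [Field K] [Algebra F K] {g : K}

/-- The point `(b + g ^ 3 * m + g * c, m, c)` attached to `v = ((m, c), b)`: a shear of
`(b, m, c)`, chosen to make the first coordinates of the points `genericPoint g v` distinct. -/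
def shearedPoint (g : K) (v : (F × F) × F) : K × K × K :=
  (algebraMap F K v.2 + g ^ 3 * algebraMap F K v.1.1 + g * algebraMap F K v.1.2,
    algebraMap F K v.1.1, algebraMap F K v.1.2)

/-- The image of `shearedPoint g v` under the projective transformation that divides `(b, m, c)` by
`1 + g * m`. -/
def genericPoint (g : K) (v : (F × F) × F) : K × K × K :=
  (1 + g * algebraMap F K v.1.1)⁻¹ • shearedPoint g v

theorem one_add_mul_algebraMap_ne_zero (hg : Transcendental F g) (m : F) :
    1 + g * algebraMap F K m ≠ 0 := by
  intro h
  have hp := transcendental_iff.mp hg (1 + Polynomial.C m * Polynomial.X)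
    (by rw [map_add, map_one, map_mul, Polynomial.aeval_C, Polynomial.aeval_X, mul_comm, h])
  simpa using congrArg (Polynomial.coeff · 0) hp

theorem genericPoint_fst_injective (hg : Transcendental F g) :
    Function.Injective fun v : (F × F) × F => (genericPoint g v).1 := by
  rintro ⟨⟨m, c⟩, b⟩ ⟨⟨m', c'⟩, b'⟩ h
  simp only [genericPoint, shearedPoint, Prod.smul_fst, smul_eq_mul] at h
  rw [inv_mul_eq_div, inv_mul_eq_div, div_eq_div_iff (one_add_mul_algebraMap_ne_zero hg m)
    (one_add_mul_algebraMap_ne_zero hg m')] at h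
  have hcoeff := transcendental_iff.mp hg (Polynomial.C (b - b') +
    Polynomial.C (c + b * m' - (c' + b' * m)) * Polynomial.X +
    Polynomial.C (c * m' - c' * m) * Polynomial.X ^ 2 +
    Polynomial.C (m - m') * Polynomial.X ^ 3) (by
      simp only [map_add, map_sub, map_mul, map_pow, Polynomial.aeval_C, Polynomial.aeval_X]
      linear_combination h)
  have h₀ : b - b' = 0 := by
    simpa [Polynomial.coeff_X, -map_add, -map_mul, -map_sub] using
      congrArg (Polynomial.coeff · 0) hcoeff
  have h₁ : c + b * m' - (c' + b' * m) = 0 := by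
    simpa [Polynomial.coeff_X, Polynomial.coeff_C, Polynomial.coeff_X_pow, -map_add, -map_mul,
      -map_sub] using congrArg (Polynomial.coeff · 1) hcoeff
  have h₃ : m - m' = 0 := by
    simpa [Polynomial.coeff_X, Polynomial.coeff_C, -map_add, -map_mul, -map_sub] using
      congrArg (Polynomial.coeff · 3) hcoeff
  obtain rfl := sub_eq_zero.mp h₀
  obtain rfl := sub_eq_zero.mp h₃
  simp only [Prod.mk.injEq, true_and, and_true]
  linear_combination h₁

theorem meets_genericPoint (hg : Transcendental F g) {v v' : (F × F) × F}
    (h : v.1.1 * v'.2 + v.1.2 = v'.1.1 * v.2 + v'.1.2) :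
    Meets (genericPoint g v) (genericPoint g v') := by
  have hK := congrArg (algebraMap F K) h
  simp only [map_add, map_mul] at hK
  have hw := mul_inv_cancel₀ (one_add_mul_algebraMap_ne_zero hg v.1.1)
  have hw' := mul_inv_cancel₀ (one_add_mul_algebraMap_ne_zero hg v'.1.1)
  simp only [Meets, genericPoint, shearedPoint, Prod.smul_fst, Prod.smul_snd, smul_eq_mul]
  set w := (1 + g * algebraMap F K v.1.1)⁻¹
  set w' := (1 + g * algebraMap F K v'.1.1)⁻¹
  linear_combination w * w' * hK - algebraMap F K v.1.2 * w * hw' + algebraMap F K v'.1.2 * w' * hw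

theorem shearedPoint_injective (g : K) :
    Function.Injective (shearedPoint g : (F × F) × F → K × K × K) := by
  rintro ⟨⟨m, c⟩, b⟩ ⟨⟨m', c'⟩, b'⟩ h
  have hι := FaithfulSMul.algebraMap_injective F K
  simp only [shearedPoint, Prod.mk.injEq] at h
  obtain ⟨hb, hm, hc⟩ := h
  rw [hm, hc, add_left_inj, add_left_inj] at hb
  rw [hι hm, hι hc, hι hb]

theorem injOn_or_forall_eq_of_collinear_shearedPoint {R : Set ((F × F) × F)}
    (hcol : Collinear K (shearedPoint g '' R)) {φ : Module.Dual K (K × K × K)}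
    {f : (F × F) × F → F} (hφ : ∀ v, φ (shearedPoint g v) = algebraMap F K (f v)) :
    Set.InjOn f R ∨ ∀ v ∈ R, ∀ w ∈ R, f v = f w := by
  refine (injOn_or_forall_eq_of_collinear hcol φ).imp (fun h v hv w hw hvw => ?_)
    fun h v hv w hw => FaithfulSMul.algebraMap_injective F K ?_
  · refine shearedPoint_injective g (h (Set.mem_image_of_mem _ hv) (Set.mem_image_of_mem _ hw) ?_)
    rw [hφ, hφ, hvw]
  · rw [← hφ, ← hφ]
    exact h _ (Set.mem_image_of_mem _ hv) _ (Set.mem_image_of_mem _ hw)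

theorem card_le_of_collinear_shearedPoint [DecidableEq F] {L : Finset (F × F)} {B : Finset F}
    {k : ℕ} (hB : #B ≤ k) (hfst : #(L.image Prod.fst) ≤ k) (hfiber : ∀ m, #{l ∈ L | l.1 = m} ≤ k)
    {R : Finset ((F × F) × F)} (hR : R ⊆ L ×ˢ B)
    (hcol : Collinear K (shearedPoint g '' (R : Set ((F × F) × F)))) : #R ≤ k := by
  let mCoord : Module.Dual K (K × K × K) := LinearMap.fst K K K ∘ₗ LinearMap.snd K K (K × K)
  let bCoord : Module.Dual K (K × K × K) := LinearMap.fst K K (K × K) - g ^ 3 • mCoord -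
    g • (LinearMap.snd K K K ∘ₗ LinearMap.snd K K (K × K))
  have hb (v : (F × F) × F) : bCoord (shearedPoint g v) = algebraMap F K v.2 := by
    simp only [bCoord, mCoord, shearedPoint, LinearMap.sub_apply, LinearMap.smul_apply,
      LinearMap.comp_apply, LinearMap.fst_apply, LinearMap.snd_apply, smul_eq_mul]
    ring
  have hm (v : (F × F) × F) : mCoord (shearedPoint g v) = algebraMap F K v.1.1 := rfl
  have hmem : ∀ v ∈ R, v.1 ∈ L ∧ v.2 ∈ B := fun v hv => mem_product.mp (hR hv)
  rcases injOn_or_forall_eq_of_collinear_shearedPoint hcol hb with hinj | hbconst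
  · exact (card_le_card_of_injOn _ (fun v hv => (hmem v hv).2) hinj).trans hB
  rcases injOn_or_forall_eq_of_collinear_shearedPoint hcol hm with hinj | hmconst
  · exact (card_le_card_of_injOn _
      (fun v hv => mem_image_of_mem Prod.fst (hmem v hv).1) hinj).trans hfst
  rcases R.eq_empty_or_nonempty with rfl | ⟨v₀, hv₀⟩
  · exact Nat.zero_le k
  · refine (card_le_card_of_injOn Prod.fst (fun v hv => ?_) ?_).trans (hfiber v₀.1.1)
    · exact mem_filter.mpr ⟨(hmem v hv).1, hmconst v hv v₀ hv₀⟩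
    · exact fun v hv w hw h => Prod.ext h (hbconst v hv w hw)

theorem collinearCardLE_image_genericPoint [DecidableEq F] [DecidableEq K] (hg : Transcendental F g)
    {L : Finset (F × F)} {B : Finset F} {k : ℕ} (hB : #B ≤ k) (hfst : #(L.image Prod.fst) ≤ k)
    (hfiber : ∀ m, #{l ∈ L | l.1 = m} ≤ k) :
    CollinearCardLE K ((L ×ˢ B).image (genericPoint g)) k := by
  intro R hR hcol
  obtain ⟨R', hR', rfl⟩ := subset_image_iff.mp hR
  refine card_image_le.trans (card_le_of_collinear_shearedPoint hB hfst hfiber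
    (coe_subset.mp (by exact_mod_cast hR')) (g := g) ?_)
  refine collinear_of_collinear_perspective
    (φ := g • LinearMap.fst K K K ∘ₗ LinearMap.snd K K (K × K)) ?_ ?_
  · rintro _ ⟨v, -, rfl⟩
    exact one_add_mul_algebraMap_ne_zero hg v.1.1
  · rw [coe_image] at hcol
    rwa [Set.image_image]

end GenericProjection

section AffineEnergy

variable {F : Type*} [Field F] [DecidableEq F]

/-- The number of coincidences `l b = l' b'` with `l, l' ∈ L` and `b, b' ∈ B`, where `l = (m, c)`
acts as the affine map `b ↦ m * b + c`. -/
def affineEnergy (L : Finset (F × F)) (B : Finset F) : ℕ :=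
  #{q ∈ (L ×ˢ B) ×ˢ (L ×ˢ B) | q.1.1.1 * q.1.2 + q.1.1.2 = q.2.1.1 * q.2.2 + q.2.1.2}

theorem incidences_eq_card_filter (S T : Finset (F × F × F)) :
    incidences S T = #{x ∈ S ×ˢ T | Meets x.1 x.2} := by
  rw [incidences, card_filter, sum_product_right]
  exact sum_congr rfl fun t _ => card_filter _ _

-- Swapping the `B`-coordinates of a coincidence turns it into an incidence of the two points.
theorem affineEnergy_le_incidences {K : Type*} [Field K] [DecidableEq K] [Algebra F K] {g : K}
    (hg : Transcendental F g) (L : Finset (F × F)) (B : Finset F) :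
    affineEnergy L B ≤ incidences ((L ×ˢ B).image (genericPoint g))
      ((L ×ˢ B).image (genericPoint g)) := by
  have hinj : Function.Injective (genericPoint g : (F × F) × F → K × K × K) :=
    (genericPoint_fst_injective hg).of_comp (f := Prod.fst)
  rw [incidences_eq_card_filter]
  refine card_le_card_of_injOn
    (fun q => (genericPoint g (q.1.1, q.2.2), genericPoint g (q.2.1, q.1.2))) ?_ ?_
  · rintro ⟨⟨l, b⟩, l', b'⟩ hq
    simp only [coe_filter, mem_product, Set.mem_ofPred_eq] at hq ⊢
    obtain ⟨⟨⟨hl, hb⟩, hl', hb'⟩, heq⟩ := hq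
    exact ⟨⟨mem_image_of_mem _ (mk_mem_product hl hb'), mem_image_of_mem _ (mk_mem_product hl' hb)⟩,
      meets_genericPoint hg heq⟩
  · rintro ⟨⟨l, b⟩, l', b'⟩ - ⟨⟨l₁, b₁⟩, l₁', b₁'⟩ - h
    simp only [Prod.mk.injEq, hinj.eq_iff] at h ⊢
    tauto

theorem affineEnergy_le {p k Q : ℕ} (hchar : ∀ n : ℕ, 0 < n → n < p → (n : F) ≠ 0)
    {L : Finset (F × F)} {B : Finset F} (hB : #B ≤ k) (hfst : #(L.image Prod.fst) ≤ k)
    (hfiber : ∀ m, #{l ∈ L | l.1 = m} ≤ k) (hQ : 2000000 * (#L * #B) ≤ Q ^ 2)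
    (hp : 216 * (#L * #B) < p * Q) : affineEnergy L B ≤ 2 * (Q + k) * (#L * #B) := by
  classical
  have hg : Transcendental F (RatFunc.X : RatFunc F) := RatFunc.transcendental_X
  set S := (L ×ˢ B).image (genericPoint (RatFunc.X : RatFunc F))
  have hinj : Set.InjOn Prod.fst (S : Set (RatFunc F × RatFunc F × RatFunc F)) := by
    rw [coe_image]
    rintro _ ⟨v, -, rfl⟩ _ ⟨w, -, rfl⟩ h
    rw [genericPoint_fst_injective hg h]
  have hcol : CollinearCardLE (RatFunc F) S k :=
    collinearCardLE_image_genericPoint hg hB hfst hfiber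
  have hcard : #S ≤ #L * #B := card_image_le.trans (card_product L B).le
  have hcharK (n : ℕ) (hn : 0 < n) (hnp : n < p) : (n : RatFunc F) ≠ 0 := by
    rw [← map_natCast (algebraMap F (RatFunc F))]
    exact (map_ne_zero _).mpr (hchar n hn hnp)
  calc affineEnergy L B ≤ incidences S S := affineEnergy_le_incidences hg L B
    _ ≤ (Q + k) * (#S + #S) := incidences_le (N := 2 * (#L * #B)) hcharK hinj hinj hcol hcol
        (by omega) (by omega) (by omega)
    _ ≤ (Q + k) * (#L * #B + #L * #B) := by gcongr
    _ = 2 * (Q + k) * (#L * #B) := by ring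

theorem exists_richness {p N : ℕ} {κ : ℝ} (hκ : 1 ≤ κ) (hN : 0 < N) (hp : (N : ℝ) ≤ κ * p ^ 2) :
    ∃ Q : ℕ, 2000000 * N ≤ Q ^ 2 ∧ 216 * N < p * Q ∧
      (2 * (Q + N.sqrt) * N : ℝ) ^ 2 ≤ 10 ^ 7 * κ * N ^ 3 := by
  set x := √(κ * N)
  have hxsq : x ^ 2 = κ * N := Real.sq_sqrt (by positivity)
  have hN1 : (1 : ℝ) ≤ N := by exact_mod_cast hN
  have hNx : N ≤ x ^ 2 := by rw [hxsq]; exact le_mul_of_one_le_left (by positivity) hκ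
  have hx1 : 1 ≤ x := Real.one_le_sqrt.mpr (one_le_mul_of_one_le_of_one_le hκ hN1)
  have hsqrt : (N.sqrt : ℝ) ≤ x :=
    Real.nat_sqrt_le_real_sqrt.trans (Real.sqrt_le_iff.mpr ⟨by positivity, hNx⟩)
  have hxp : N ≤ p * x := by
    refine abs_le_of_sq_le_sq' ?_ (by positivity) |>.2
    rw [mul_pow, hxsq]
    nlinarith
  have hQ : 1500 * x ≤ ⌈1500 * x⌉₊ := Nat.le_ceil _
  have hQ' : ⌈1500 * x⌉₊ ≤ 1500 * x + 1 := (Nat.ceil_lt_add_one (by positivity)).le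
  generalize ⌈1500 * x⌉₊ = Q at hQ hQ'
  refine ⟨Q, ?_, ?_, ?_⟩
  · have : (2000000 * N : ℝ) ≤ Q ^ 2 := by nlinarith
    exact_mod_cast this
  · have : (216 * N : ℝ) < p * Q := by nlinarith [mul_le_mul_of_nonneg_left hQ p.cast_nonneg]
    exact_mod_cast this
  calc (2 * (Q + N.sqrt) * N : ℝ) ^ 2 ≤ (2 * (1500 * x + x + x) * N) ^ 2 := by gcongr; linarith
    _ = 3004 ^ 2 * κ * N ^ 3 := by linear_combination 3004 ^ 2 * (N : ℝ) ^ 2 * hxsq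
    _ ≤ 10 ^ 7 * κ * N ^ 3 := by gcongr; norm_num

theorem sq_affineEnergy_le {p : ℕ} {κ : ℝ} (hκ : 1 ≤ κ)
    (hchar : ∀ n : ℕ, 0 < n → n < p → (n : F) ≠ 0) {L : Finset (F × F)} {B : Finset F}
    (hB : #B ^ 2 ≤ #L * #B) (hfst : #(L.image Prod.fst) ^ 2 ≤ #L * #B)
    (hfiber : ∀ m, #{l ∈ L | l.1 = m} ^ 2 ≤ #L * #B) (hp : (#L * #B : ℝ) ≤ κ * p ^ 2) :
    (affineEnergy L B : ℝ) ^ 2 ≤ 10 ^ 7 * κ * (#L * #B) ^ 3 := by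
  rcases (#L * #B).eq_zero_or_pos with h0 | hpos
  · have hempty : L ×ˢ B = ∅ := by rw [← card_eq_zero, card_product, h0]
    have hzero : (#L * #B : ℝ) = 0 := by exact_mod_cast h0
    simp [affineEnergy, hempty, hzero]
  obtain ⟨Q, hQ, hpQ, hbound⟩ := exists_richness hκ hpos (by exact_mod_cast hp)
  have hle : (affineEnergy L B : ℝ) ≤ 2 * (Q + (#L * #B).sqrt) * (#L * #B : ℕ) := by
    exact_mod_cast affineEnergy_le hchar (Nat.le_sqrt'.mpr hB) (Nat.le_sqrt'.mpr hfst)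
      (fun m => Nat.le_sqrt'.mpr (hfiber m)) hQ hpQ
  rw [← Nat.cast_mul]
  exact (pow_le_pow_left₀ (Nat.cast_nonneg _) hle 2).trans hbound

end AffineEnergy

section CubicEnergy

theorem sq_card_le_card_mul_card_filter_eq {α β : Type*} [DecidableEq β] {s : Finset α}
    {t : Finset β} {f : α → β} (hf : ∀ x ∈ s, f x ∈ t) :
    #s ^ 2 ≤ #t * #{q ∈ s ×ˢ s | f q.1 = f q.2} := by
  have hfiber : ∀ b ∈ t,
      #{q ∈ {q ∈ s ×ˢ s | f q.1 = f q.2} | f q.1 = b} = #{x ∈ s | f x = b} ^ 2 := by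
    intro b _
    rw [sq, ← card_product, ← filter_product, filter_filter]
    congr 1
    refine filter_congr fun q _ => ⟨?_, ?_⟩
    · rintro ⟨h, rfl⟩
      exact ⟨rfl, h.symm⟩
    · rintro ⟨rfl, h⟩
      exact ⟨h.symm, rfl⟩
  rw [card_eq_sum_card_fiberwise hf, card_eq_sum_card_fiberwise (t := t) (f := fun q => f q.1)
    fun q hq => hf _ (mem_product.mp (mem_filter.mp hq).1).1, sum_congr rfl hfiber]
  exact sq_sum_le_card_mul_sum_sq

variable {G : Type*} [AddCommGroup G] [DecidableEq G]

/-- The third moment energy `E₃⁺(A)`: the sum of the cubes of the representation function of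
`A - A`. -/
def cubicEnergy (A : Finset G) : ℕ := ∑ d ∈ A - A, A.addConvolution (-A) d ^ 3

/-- The differences with at least `t` representations in `A - A`. -/
def popularDifferences (A : Finset G) (t : ℕ) : Finset G :=
  {d ∈ A - A | t ≤ A.addConvolution (-A) d}

theorem sum_addConvolution_neg (A P : Finset G) :
    ∑ d ∈ P, A.addConvolution (-A) d = #{q ∈ A ×ˢ A | q.1 - q.2 ∈ P} := by
  have hmaps : ∀ q ∈ {q ∈ A ×ˢ A | q.1 - q.2 ∈ P}, q.1 - q.2 ∈ P :=
    fun q hq => (mem_filter.mp hq).2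
  rw [card_eq_sum_card_fiberwise hmaps]
  refine sum_congr rfl fun d hd => ?_
  rw [← card_sub_eq, filter_filter]
  congr 1
  refine filter_congr fun q _ => ⟨?_, And.right⟩
  rintro rfl
  exact ⟨hd, rfl⟩

theorem sum_addConvolution_neg_sub (A : Finset G) :
    ∑ d ∈ A - A, A.addConvolution (-A) d = #A ^ 2 := by
  rw [sum_addConvolution_neg, sq, ← card_product, filter_true_of_mem]
  exact fun q hq => sub_mem_sub (mem_product.mp hq).1 (mem_product.mp hq).2

theorem addEnergy_eq_sum_addConvolution (A X : Finset G) :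
    A.addEnergy X = ∑ v ∈ X ×ˢ X, A.addConvolution (-A) (v.1 - v.2) := by
  simp only [addEnergy, ← card_sub_eq, ← card_sigma]
  refine card_nbij' (fun q => ⟨(q.2.2, q.2.1), q.1⟩) (fun q => (q.2, q.1.2, q.1.1)) ?_ ?_ ?_ ?_
  · rintro ⟨a, x⟩ hq
    simp only [coe_filter, coe_sigma, mem_product, Set.mem_ofPred_eq, Set.mem_sigma_iff,
      mem_coe] at hq ⊢
    obtain ⟨⟨ha, hx⟩, h⟩ := hq
    exact ⟨hx.symm, ha, sub_eq_sub_iff_add_eq_add.mpr (by rw [h, add_comm])⟩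
  · rintro ⟨v, a⟩ hq
    simp only [coe_filter, coe_sigma, mem_product, Set.mem_ofPred_eq, Set.mem_sigma_iff,
      mem_coe] at hq ⊢
    obtain ⟨hv, ha, h⟩ := hq
    exact ⟨⟨ha, hv.symm⟩, (sub_eq_sub_iff_add_eq_add.mp h).trans (add_comm _ _)⟩
  · exact fun _ _ => rfl
  · exact fun _ _ => rfl

theorem sq_card_le_two_mul_sum_popularDifferences {A : Finset G} {t : ℕ}
    (ht : 2 * (#(A - A) * (t - 1)) ≤ #A ^ 2) :
    #A ^ 2 ≤ 2 * ∑ d ∈ popularDifferences A t, A.addConvolution (-A) d := by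
  have hsplit := sum_filter_add_sum_filter_not (A - A) (fun d => t ≤ A.addConvolution (-A) d)
    (A.addConvolution (-A))
  have hrest : ∑ d ∈ A - A with ¬ t ≤ A.addConvolution (-A) d, A.addConvolution (-A) d ≤
      #(A - A) * (t - 1) :=
    (sum_le_card_nsmul _ _ (t - 1) fun d hd => by have := (mem_filter.mp hd).2; omega).trans
      (Nat.mul_le_mul_right _ (card_filter_le _ _))
  rw [sum_addConvolution_neg_sub] at hsplit
  rw [popularDifferences]
  omega

theorem card_filter_sub_eq_sub_le_cubicEnergy (A : Finset G) :
    #{q ∈ (A ×ˢ A ×ˢ A) ×ˢ (A ×ˢ A ×ˢ A) |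
      (q.1.2.1 - q.1.1, q.1.2.2 - q.1.1) = (q.2.2.1 - q.2.1, q.2.2.2 - q.2.1)} ≤
      cubicEnergy A := by
  let fiber (d : G) : Finset (G × G) := {q ∈ A ×ˢ A | q.1 - q.2 = d}
  have hcard : cubicEnergy A = #((A - A).sigma fun d => fiber d ×ˢ fiber d ×ˢ fiber d) := by
    rw [cubicEnergy, card_sigma]
    refine sum_congr rfl fun d _ => ?_
    rw [card_product, card_product, card_sub_eq]
    ring
  rw [hcard]
  refine card_le_card_of_injOn (fun q => ⟨q.2.1 - q.1.1,
    ((q.2.1, q.1.1), (q.2.2.1, q.1.2.1), (q.2.2.2, q.1.2.2))⟩) ?_ ?_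
  · rintro ⟨⟨a, b, c⟩, ⟨a', b', c'⟩⟩ hq
    simp only [coe_filter, mem_product, Set.mem_ofPred_eq, Prod.mk.injEq] at hq
    obtain ⟨⟨⟨ha, hb, hc⟩, ha', hb', hc'⟩, h₁, h₂⟩ := hq
    simp only [fiber, coe_sigma, Set.mem_sigma_iff, mem_coe, mem_product, mem_filter]
    refine ⟨sub_mem_sub ha' ha, ⟨⟨ha', ha⟩, trivial⟩, ⟨⟨hb', hb⟩, ?_⟩, ⟨hc', hc⟩, ?_⟩
    · rw [sub_eq_sub_iff_sub_eq_sub, ← h₁]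
    · rw [sub_eq_sub_iff_sub_eq_sub, ← h₂]
  · rintro ⟨⟨a, b, c⟩, ⟨a', b', c'⟩⟩ _ ⟨⟨_, _, _⟩, ⟨_, _, _⟩⟩ _ h
    simp only [Sigma.mk.injEq, heq_eq_eq, Prod.mk.injEq] at h
    obtain ⟨_, ⟨rfl, rfl⟩, ⟨rfl, rfl⟩, rfl, rfl⟩ := h
    rfl

-- Cauchy–Schwarz for the map `(a, b, c) ↦ (b - a, c - a)` on triples with `b - c ∈ P`.
theorem sq_card_mul_sum_addConvolution_le (A P : Finset G) :
    (#A * ∑ d ∈ P, A.addConvolution (-A) d) ^ 2 ≤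
      #{v ∈ (A - A) ×ˢ (A - A) | v.1 - v.2 ∈ P} * cubicEnergy A := by
  have hmaps : ∀ q ∈ A ×ˢ {q ∈ A ×ˢ A | q.1 - q.2 ∈ P}, (q.2.1 - q.1, q.2.2 - q.1) ∈
      ({v ∈ (A - A) ×ˢ (A - A) | v.1 - v.2 ∈ P} : Finset (G × G)) := by
    rintro ⟨a, b, c⟩ hq
    simp only [mem_product, mem_filter] at hq ⊢
    obtain ⟨ha, ⟨hb, hc⟩, h⟩ := hq
    exact ⟨⟨sub_mem_sub hb ha, sub_mem_sub hc ha⟩, by rwa [sub_sub_sub_cancel_right]⟩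
  rw [sum_addConvolution_neg, ← card_product]
  refine (sq_card_le_card_mul_card_filter_eq hmaps).trans ?_
  gcongr
  refine (card_le_card ?_).trans (card_filter_sub_eq_sub_le_cubicEnergy A)
  gcongr <;> exact filter_subset _ _

theorem card_filter_mul_le_addEnergy (A X : Finset G) (t : ℕ) :
    #{v ∈ X ×ˢ X | v.1 - v.2 ∈ popularDifferences A t} * t ≤ A.addEnergy X := by
  rw [addEnergy_eq_sum_addConvolution]
  calc #{v ∈ X ×ˢ X | v.1 - v.2 ∈ popularDifferences A t} * t
      ≤ ∑ v ∈ X ×ˢ X with v.1 - v.2 ∈ popularDifferences A t,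
          A.addConvolution (-A) (v.1 - v.2) := by
        refine card_nsmul_le_sum _ (fun v : G × G => A.addConvolution (-A) (v.1 - v.2)) t ?_
        exact fun v hv => (mem_filter.mp (mem_filter.mp hv).2).2
    _ ≤ ∑ v ∈ X ×ˢ X, A.addConvolution (-A) (v.1 - v.2) :=
        sum_le_sum_of_subset (filter_subset _ _)

theorem card_pow_le_addEnergy_mul_cubicEnergy (A : Finset G) :
    #A ^ 8 ≤ 8 * #(A - A) * A.addEnergy (A - A) * cubicEnergy A := by
  rcases A.eq_empty_or_nonempty with rfl | hA
  · simp
  have hpos : 0 < 2 * #(A - A) := Nat.mul_pos two_pos (hA.sub hA).card_pos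
  set t := #A ^ 2 ⌈/⌉ (2 * #(A - A)) with ht
  have ht1 : #A ^ 2 ≤ 2 * #(A - A) * t := le_smul_ceilDiv hpos
  have ht2 : 2 * (#(A - A) * (t - 1)) ≤ #A ^ 2 := by
    by_contra! h
    have hle : t ≤ t - 1 := by
      rw [ht, ceilDiv_le_iff_le_mul hpos, ← ht]
      linarith
    have ht0 : t = 0 := by omega
    simp [ht0] at h
  set w := ∑ d ∈ popularDifferences A t, A.addConvolution (-A) d
  set V := {v ∈ (A - A) ×ˢ (A - A) | v.1 - v.2 ∈ popularDifferences A t}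
  have hw : #A ^ 2 ≤ 2 * w := sq_card_le_two_mul_sum_popularDifferences ht2
  calc #A ^ 8 = #A ^ 4 * (#A ^ 2) ^ 2 := by ring
    _ ≤ #A ^ 4 * (2 * w) ^ 2 := by gcongr
    _ = 4 * #A ^ 2 * (#A * w) ^ 2 := by ring
    _ ≤ 4 * (2 * #(A - A) * t) * (#V * cubicEnergy A) := by
        gcongr
        exact sq_card_mul_sum_addConvolution_le A _
    _ = 8 * #(A - A) * (#V * t) * cubicEnergy A := by ring
    _ ≤ 8 * #(A - A) * A.addEnergy (A - A) * cubicEnergy A := by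
        gcongr
        exact card_filter_mul_le_addEnergy A _ t

theorem pow_three_le_add_sum_Ioc (τ r : ℕ) :
    r ^ 3 ≤ 3 * τ ^ 2 * r + ∑ t ∈ Ioc τ r, 3 * t ^ 2 := by
  rcases le_total r τ with h | h
  · calc r ^ 3 = r ^ 2 * r := by ring
      _ ≤ τ ^ 2 * r := by gcongr
      _ ≤ 3 * τ ^ 2 * r := by linarith [Nat.zero_le (τ ^ 2 * r)]
      _ ≤ 3 * τ ^ 2 * r + ∑ t ∈ Ioc τ r, 3 * t ^ 2 := Nat.le_add_right _ _
  · have hτ : τ ^ 3 ≤ τ ^ 2 * r := by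
      rw [pow_succ]
      gcongr
    have htail : r ^ 3 ≤ τ ^ 3 + ∑ t ∈ Ioc τ r, 3 * t ^ 2 := by
      clear hτ
      induction r, h using Nat.le_induction with
      | base => simp
      | succ n hn ih =>
        rw [sum_Ioc_succ_top hn]
        nlinarith
    nlinarith

theorem cubicEnergy_le_add_sum (A : Finset G) (τ : ℕ) :
    cubicEnergy A ≤
      3 * τ ^ 2 * #A ^ 2 + ∑ t ∈ Ioc τ #A, 3 * t ^ 2 * #(popularDifferences A t) := by
  have hcube : ∀ d ∈ A - A, A.addConvolution (-A) d ^ 3 ≤ 3 * τ ^ 2 * A.addConvolution (-A) d +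
      ∑ t ∈ Ioc τ #A, if t ≤ A.addConvolution (-A) d then 3 * t ^ 2 else 0 := by
    intro d _
    refine (pow_three_le_add_sum_Ioc τ _).trans ?_
    rw [← sum_filter]
    gcongr
    intro t ht
    have : A.addConvolution (-A) d ≤ #A := addConvolution_le_card_left
    simp only [mem_Ioc, mem_filter] at ht ⊢
    omega
  refine (sum_le_sum hcube).trans_eq ?_
  rw [sum_add_distrib, ← mul_sum, sum_addConvolution_neg_sub, sum_comm]
  congr 1
  refine sum_congr rfl fun t _ => ?_
  rw [← sum_filter, sum_const, smul_eq_mul, mul_comm, popularDifferences]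

theorem cubicEnergy_le {A : Finset G} {c : ℝ} {τ : ℕ} (hτ : 0 < τ)
    (hc : ∀ t : ℕ, (t : ℝ) ^ 4 * #(popularDifferences A t) ≤ c) :
    (cubicEnergy A : ℝ) ≤ 3 * τ ^ 2 * #A ^ 2 + 3 * c / τ := by
  have hc0 : 0 ≤ c := by simpa using hc 0
  have hterm : ∀ t ∈ Ioc τ #A,
      3 * (t : ℝ) ^ 2 * #(popularDifferences A t) ≤ 3 * c * ((t : ℝ) ^ 2)⁻¹ := by
    intro t ht
    have ht0 : 0 < (t : ℝ) := by exact_mod_cast hτ.trans (mem_Ioc.mp ht).1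
    rw [← div_eq_mul_inv, le_div_iff₀ (by positivity)]
    linarith [hc t]
  have htail : ∑ t ∈ Ioc τ #A, ((t : ℝ) ^ 2)⁻¹ ≤ (τ : ℝ)⁻¹ := by
    rcases le_total τ #A with hle | hle
    · exact (sum_Ioc_inv_sq_le_sub hτ.ne' hle).trans (sub_le_self _ (by positivity))
    · rw [Ioc_eq_empty_of_le hle, sum_empty]
      positivity
  calc (cubicEnergy A : ℝ)
      ≤ 3 * τ ^ 2 * #A ^ 2 + ∑ t ∈ Ioc τ #A, 3 * (t : ℝ) ^ 2 * #(popularDifferences A t) := by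
        exact_mod_cast cubicEnergy_le_add_sum A τ
    _ ≤ 3 * τ ^ 2 * #A ^ 2 + 3 * c * ∑ t ∈ Ioc τ #A, ((t : ℝ) ^ 2)⁻¹ := by
        rw [mul_sum]
        exact add_le_add_right (sum_le_sum hterm) _
    _ ≤ 3 * τ ^ 2 * #A ^ 2 + 3 * c / τ := by
        rw [div_eq_mul_inv]
        gcongr

-- The threshold `τ ≈ M ^ (2 / 3)` balances the two terms of `cubicEnergy_le`.
theorem cubicEnergy_pow_three_le {A : Finset G} {C M : ℝ} (hC : 1 ≤ C) (hM : 1 ≤ M)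
    (h : ∀ t : ℕ, (t : ℝ) ^ 4 * #(popularDifferences A t) ≤ C * M ^ 2 * #A ^ 2) :
    (cubicEnergy A : ℝ) ^ 3 ≤ (15 * C) ^ 3 * #A ^ 6 * M ^ 4 := by
  set x : ℝ := M ^ (2 / 3 : ℝ)
  have hx3 : x ^ 3 = M ^ 2 := by
    rw [← Real.rpow_natCast, ← Real.rpow_mul (by positivity), ← Real.rpow_natCast]
    norm_num
  have hx1 : 1 ≤ x := Real.one_le_rpow hM (by norm_num)
  have hxτ : x ≤ ⌈x⌉₊ := Nat.le_ceil x
  have hτx : (⌈x⌉₊ : ℝ) ≤ 2 * x := Nat.ceil_le_two_mul (by linarith)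
  have henergy : (cubicEnergy A : ℝ) ≤ 15 * C * x ^ 2 * #A ^ 2 :=
    calc (cubicEnergy A : ℝ)
        ≤ 3 * ⌈x⌉₊ ^ 2 * #A ^ 2 + 3 * (C * M ^ 2 * #A ^ 2) / ⌈x⌉₊ :=
          cubicEnergy_le (Nat.ceil_pos.mpr (by linarith)) h
      _ ≤ 3 * (2 * x) ^ 2 * #A ^ 2 + 3 * (C * x ^ 3 * #A ^ 2) / x := by
          rw [hx3]
          gcongr
      _ = (12 + 3 * C) * (x ^ 2 * #A ^ 2) := by
          field_simp
          ring
      _ ≤ (15 * C) * (x ^ 2 * #A ^ 2) := by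
          gcongr
          linarith
      _ = 15 * C * x ^ 2 * #A ^ 2 := by ring
  calc (cubicEnergy A : ℝ) ^ 3 ≤ (15 * C * x ^ 2 * #A ^ 2) ^ 3 := by gcongr
    _ = (15 * C) ^ 3 * #A ^ 6 * (x ^ 3) ^ 2 := by ring
    _ = (15 * C) ^ 3 * #A ^ 6 * M ^ 4 := by
        rw [hx3]
        ring

end CubicEnergy

section SumProductEstimate

variable {F : Type*} [Field F] [DecidableEq F]

theorem sq_card_mul_addEnergy_le_affineEnergy {A C X : Finset F} (hC : 0 ∉ C) :
    #C ^ 2 * A.addEnergy X ≤ affineEnergy ((A * C) ×ˢ X) C⁻¹ := by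
  have hne {u : F} (hu : u ∈ C) : u ≠ 0 := ne_of_mem_of_not_mem hu hC
  rw [sq, ← card_product, addEnergy, ← card_product, affineEnergy]
  refine card_le_card_of_injOn (fun q => (((q.2.1.1 * q.1.1, q.2.2.1), q.1.1⁻¹),
    ((q.2.1.2 * q.1.2, q.2.2.2), q.1.2⁻¹))) ?_ ?_
  · rintro ⟨⟨u, v⟩, ⟨a, a'⟩, x, x'⟩ hq
    simp only [coe_product, coe_filter, Set.mem_prod, mem_coe, mem_product,
      Set.mem_ofPred_eq] at hq ⊢
    obtain ⟨⟨hu, hv⟩, ⟨⟨ha, ha'⟩, hx, hx'⟩, h⟩ := hq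
    refine ⟨⟨⟨⟨mul_mem_mul ha hu, hx⟩, inv_mem_inv hu⟩, ⟨mul_mem_mul ha' hv, hx'⟩,
      inv_mem_inv hv⟩, ?_⟩
    rwa [mul_inv_cancel_right₀ (hne hu), mul_inv_cancel_right₀ (hne hv)]
  · rintro ⟨⟨u, v⟩, ⟨a, a'⟩, x, x'⟩ hq ⟨⟨u', v'⟩, ⟨b, b'⟩, y, y'⟩ _ h
    simp only [coe_product, Set.mem_prod, mem_coe] at hq
    simp only [Prod.mk.injEq, inv_inj] at h
    obtain ⟨⟨⟨hau, rfl⟩, rfl⟩, ⟨hav, rfl⟩, rfl⟩ := h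
    rw [mul_right_cancel₀ (hne hq.1.1) hau, mul_right_cancel₀ (hne hq.1.2) hav]

theorem card_image_fst_product_le {α β : Type*} [DecidableEq α] (s : Finset α) (t : Finset β) :
    #((s ×ˢ t).image Prod.fst) ≤ #s :=
  card_le_card fun _ hx => by
    obtain ⟨q, hq, rfl⟩ := mem_image.mp hx
    exact (mem_product.mp hq).1

theorem card_filter_fst_eq_product_le {α β : Type*} [DecidableEq α] (s : Finset α) (t : Finset β)
    (a : α) : #{q ∈ s ×ˢ t | q.1 = a} ≤ #t := by
  refine card_le_card_of_injOn Prod.snd (fun q hq => ?_) fun q hq q' hq' h => ?_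
  · exact (mem_product.mp (mem_filter.mp hq).1).2
  · exact Prod.ext ((mem_filter.mp hq).2.trans (mem_filter.mp hq').2.symm) h

theorem card_mul_sq_addEnergy_le {p : ℕ} {κ : ℝ} (hκ : 1 ≤ κ)
    (hchar : ∀ n : ℕ, 0 < n → n < p → (n : F) ≠ 0) {A C X : Finset F} (hC : 0 ∉ C)
    (hCle : #C ≤ #(A * C) * #X) (hACle : #(A * C) ≤ #X * #C) (hXle : #X ≤ #(A * C) * #C)
    (hp : (#(A * C) * #X * #C : ℝ) ≤ κ * p ^ 2) :
    (#C : ℝ) * A.addEnergy X ^ 2 ≤ 10 ^ 7 * κ * #(A * C) ^ 3 * #X ^ 3 := by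
  rcases C.eq_empty_or_nonempty with rfl | hCne
  · simp
  have hinv : #C⁻¹ = #C := card_inv C
  have hcard : #((A * C) ×ˢ X) * #C⁻¹ = #(A * C) * #X * #C := by rw [card_product, hinv]
  have henergy : (#C ^ 2 * A.addEnergy X : ℝ) ≤ affineEnergy ((A * C) ×ˢ X) C⁻¹ := by
    exact_mod_cast sq_card_mul_addEnergy_le_affineEnergy hC
  have hbound := sq_affineEnergy_le (L := (A * C) ×ˢ X) (B := C⁻¹) hκ hchar
    (by rw [hcard, hinv]; nlinarith)
    ((Nat.pow_le_pow_left (card_image_fst_product_le _ _) 2).trans (by rw [hcard]; nlinarith))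
    (fun m => (Nat.pow_le_pow_left (card_filter_fst_eq_product_le _ _ m) 2).trans
      (by rw [hcard]; nlinarith))
    (by rw [← Nat.cast_mul, hcard]; exact_mod_cast hp)
  rw [← Nat.cast_mul, hcard] at hbound
  push_cast at hbound
  have hC0 : (0 : ℝ) < #C := by exact_mod_cast hCne.card_pos
  refine le_of_mul_le_mul_left ?_ (pow_pos hC0 3)
  calc (#C : ℝ) ^ 3 * (#C * A.addEnergy X ^ 2) = (#C ^ 2 * A.addEnergy X) ^ 2 := by ring
    _ ≤ (affineEnergy ((A * C) ×ˢ X) C⁻¹ : ℝ) ^ 2 := by gcongr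
    _ ≤ 10 ^ 7 * κ * (#(A * C) * #X * #C) ^ 3 := hbound
    _ = (#C : ℝ) ^ 3 * (10 ^ 7 * κ * #(A * C) ^ 3 * #X ^ 3) := by ring

/-- The affine maps `b ↦ c * (b + d)` with `c ∈ C` and `d ∈ D`, encoded by slope and intercept. -/
def dilatedTranslations (C D : Finset F) : Finset (F × F) :=
  (C ×ˢ D).image fun q => (q.1, q.1 * q.2)

theorem card_dilatedTranslations {C D : Finset F} (hC : 0 ∉ C) :
    #(dilatedTranslations C D) = #C * #D := by
  rw [dilatedTranslations, card_image_of_injOn, card_product]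
  rintro ⟨c, d⟩ hq ⟨c', d'⟩ _ h
  simp only [Prod.mk.injEq] at h
  obtain ⟨rfl, h⟩ := h
  rw [mul_left_cancel₀ (ne_of_mem_of_not_mem (mem_product.mp hq).1 hC) h]

theorem card_image_fst_dilatedTranslations_le (C D : Finset F) :
    #((dilatedTranslations C D).image Prod.fst) ≤ #C := by
  rw [dilatedTranslations, image_image]
  exact card_image_fst_product_le C D

theorem card_filter_fst_eq_dilatedTranslations_le (C D : Finset F) (m : F) :
    #{l ∈ dilatedTranslations C D | l.1 = m} ≤ #D := by
  rw [dilatedTranslations, filter_image]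
  exact card_image_le.trans (card_filter_fst_eq_product_le C D m)

-- Cauchy–Schwarz for the map `(c, a, b) ↦ c * a` on triples with `a - b ∈ D`.
theorem sq_card_mul_sum_addConvolution_le_affineEnergy {A C D : Finset F} (hC : 0 ∉ C) :
    (#C * ∑ d ∈ D, A.addConvolution (-A) d) ^ 2 ≤
      #(C * A) * affineEnergy (dilatedTranslations C D) A := by
  have hmaps : ∀ q ∈ C ×ˢ {q ∈ A ×ˢ A | q.1 - q.2 ∈ D}, q.1 * q.2.1 ∈ C * A := fun q hq =>
    mul_mem_mul (mem_product.mp hq).1 (mem_product.mp (mem_filter.mp (mem_product.mp hq).2).1).1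
  rw [sum_addConvolution_neg, ← card_product]
  refine (sq_card_le_card_mul_card_filter_eq hmaps).trans ?_
  gcongr
  refine card_le_card_of_injOn (fun q => (((q.1.1, q.1.1 * (q.1.2.1 - q.1.2.2)), q.1.2.2),
    ((q.2.1, q.2.1 * (q.2.2.1 - q.2.2.2)), q.2.2.2))) ?_ ?_
  · rintro ⟨⟨c, a, b⟩, ⟨c', a', b'⟩⟩ hq
    simp only [coe_filter, mem_product, mem_filter, Set.mem_ofPred_eq, dilatedTranslations,
      mem_image] at hq ⊢
    obtain ⟨⟨⟨hc, ⟨_, hb⟩, hd⟩, hc', ⟨_, hb'⟩, hd'⟩, h⟩ := hq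
    refine ⟨⟨⟨⟨(c, a - b), ⟨hc, hd⟩, rfl⟩, hb⟩, ⟨(c', a' - b'), ⟨hc', hd'⟩, rfl⟩, hb'⟩, ?_⟩
    linear_combination h
  · rintro ⟨⟨c, a, b⟩, ⟨c', a', b'⟩⟩ hq ⟨⟨_, e, _⟩, ⟨_, e', _⟩⟩ _ h
    simp only [coe_filter, mem_product, Set.mem_ofPred_eq] at hq
    simp only [Prod.mk.injEq] at h
    obtain ⟨⟨⟨rfl, h⟩, rfl⟩, ⟨rfl, h'⟩, rfl⟩ := h
    have hae := mul_left_cancel₀ (ne_of_mem_of_not_mem hq.1.1.1 hC) h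
    have hae' := mul_left_cancel₀ (ne_of_mem_of_not_mem hq.1.2.1 hC) h'
    rw [sub_left_injective hae, sub_left_injective hae']

theorem sq_affineEnergy_dilatedTranslations_le {p : ℕ} {κ : ℝ} (hκ : 1 ≤ κ)
    (hchar : ∀ n : ℕ, 0 < n → n < p → (n : F) ≠ 0) {A C D : Finset F} (hC : 0 ∉ C)
    (hAle : #A ≤ #C * #D) (hCle : #C ≤ #D * #A) (hDle : #D ≤ #C * #A)
    (hp : (#C * #D * #A : ℝ) ≤ κ * p ^ 2) :
    (affineEnergy (dilatedTranslations C D) A : ℝ) ^ 2 ≤ 10 ^ 7 * κ * (#C * #D * #A) ^ 3 := by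
  have hcard := card_dilatedTranslations (D := D) hC
  have hbound := sq_affineEnergy_le (L := dilatedTranslations C D) (B := A) hκ hchar
    (by rw [hcard]; nlinarith)
    ((Nat.pow_le_pow_left (card_image_fst_dilatedTranslations_le C D) 2).trans
      (by rw [hcard]; nlinarith))
    (fun m => (Nat.pow_le_pow_left (card_filter_fst_eq_dilatedTranslations_le C D m) 2).trans
      (by rw [hcard]; nlinarith))
    (by rwa [hcard, Nat.cast_mul])
  rwa [hcard, Nat.cast_mul] at hbound

theorem pow_four_mul_card_popularDifferences_le {p : ℕ} {κ : ℝ} (hκ : 1 ≤ κ)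
    (hchar : ∀ n : ℕ, 0 < n → n < p → (n : F) ≠ 0) {A : Finset F} (hA : 0 ∉ A)
    (hp : (#A * #(A - A) * #A : ℝ) ≤ κ * p ^ 2) (t : ℕ) :
    (t : ℝ) ^ 4 * #(popularDifferences A t) ≤ 10 ^ 7 * κ * #(A * A) ^ 2 * #A ^ 2 := by
  set D := popularDifferences A t
  rcases D.eq_empty_or_nonempty with hD | hD
  · rw [hD, card_empty, Nat.cast_zero, mul_zero]
    positivity
  have hDpos : 0 < #D := hD.card_pos
  have hDsub : #D ≤ #(A - A) := card_filter_le _ _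
  have hDle : #D ≤ #A * #A := hDsub.trans card_sub_le
  have hApos : 0 < #A := Nat.pos_of_mul_pos_left (hDpos.trans_le hDle)
  have hbound : (affineEnergy (dilatedTranslations A D) A : ℝ) ^ 2 ≤
      10 ^ 7 * κ * (#A * #D * #A) ^ 3 :=
    sq_affineEnergy_dilatedTranslations_le hκ hchar hA (Nat.le_mul_of_pos_right _ hDpos)
      (Nat.le_mul_of_pos_left _ hDpos) hDle (le_trans (by gcongr) hp)
  have henergy : (#A * (#D * t) : ℝ) ^ 2 ≤
      #(A * A) * affineEnergy (dilatedTranslations A D) A := by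
    have hrep : #D * t ≤ ∑ d ∈ D, A.addConvolution (-A) d :=
      card_nsmul_le_sum _ _ _ fun d hd => (mem_filter.mp hd).2
    exact_mod_cast (Nat.pow_le_pow_left (Nat.mul_le_mul_left _ hrep) 2).trans
      (sq_card_mul_sum_addConvolution_le_affineEnergy hA)
  have hscale : (0 : ℝ) < #A ^ 4 * #D ^ 3 := by positivity
  refine le_of_mul_le_mul_left ?_ hscale
  calc (#A ^ 4 * #D ^ 3 : ℝ) * (t ^ 4 * #D) = ((#A * (#D * t)) ^ 2) ^ 2 := by ring
    _ ≤ (#(A * A) * affineEnergy (dilatedTranslations A D) A : ℝ) ^ 2 := by gcongr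
    _ = #(A * A) ^ 2 * (affineEnergy (dilatedTranslations A D) A : ℝ) ^ 2 := mul_pow _ _ _
    _ ≤ #(A * A) ^ 2 * (10 ^ 7 * κ * (#A * #D * #A) ^ 3) := by gcongr
    _ = #A ^ 4 * #D ^ 3 * (10 ^ 7 * κ * #(A * A) ^ 2 * #A ^ 2) := by ring

theorem card_pow_le_of_zero_notMem {p : ℕ} {κ : ℝ} (hκ : 1 ≤ κ)
    (hchar : ∀ n : ℕ, 0 < n → n < p → (n : F) ≠ 0) {A : Finset F} (hA : 0 ∉ A)
    (hp : (#A * #(A - A) * #(A * A) : ℝ) ≤ κ * p ^ 2) :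
    (#A : ℝ) ^ 39 ≤ 10 ^ 76 * κ ^ 9 * #(A - A) ^ 15 * #(A * A) ^ 17 := by
  rcases A.eq_empty_or_nonempty with rfl | hne
  · simp
  have hAM : #A ≤ #(A * A) := card_le_card_mul_self₀
  have hAD : #A ≤ #(A - A) := card_le_card_sub_right hne
  have hApos : 0 < #A := hne.card_pos
  have hM : #(A * A) ≤ #A * #A := card_mul_le
  have hD : #(A - A) ≤ #A * #A := card_sub_le
  have henergy : (#A : ℝ) * A.addEnergy (A - A) ^ 2 ≤ 10 ^ 7 * κ * #(A * A) ^ 3 * #(A - A) ^ 3 :=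
    card_mul_sq_addEnergy_le hκ hchar hA (by nlinarith) (by nlinarith) (by nlinarith)
      (le_trans (by linarith) hp)
  have hcubic : (cubicEnergy A : ℝ) ^ 3 ≤ (15 * (10 ^ 7 * κ)) ^ 3 * #A ^ 6 * #(A * A) ^ 4 :=
    cubicEnergy_pow_three_le (by linarith) (by exact_mod_cast hApos.trans_le hAM)
      (pow_four_mul_card_popularDifferences_le hκ hchar hA (le_trans (by gcongr) hp))
  have hthird : (#A : ℝ) ^ 8 ≤ 8 * #(A - A) * A.addEnergy (A - A) * cubicEnergy A := by
    exact_mod_cast card_pow_le_addEnergy_mul_cubicEnergy A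
  have hscale : (0 : ℝ) < #A ^ 12 := by positivity
  set a := (#A : ℝ)
  set d := (#(A - A) : ℝ)
  set m := (#(A * A) : ℝ)
  set e := (A.addEnergy (A - A) : ℝ)
  set e₃ := (cubicEnergy A : ℝ)
  refine le_of_mul_le_mul_left ?_ hscale
  calc a ^ 12 * a ^ 39 = a ^ 3 * (a ^ 8) ^ 6 := by ring
    _ ≤ a ^ 3 * (8 * d * e * e₃) ^ 6 := by gcongr
    _ = 8 ^ 6 * d ^ 6 * (a * e ^ 2) ^ 3 * (e₃ ^ 3) ^ 2 := by ring
    _ ≤ 8 ^ 6 * d ^ 6 * (10 ^ 7 * κ * m ^ 3 * d ^ 3) ^ 3 *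
        ((15 * (10 ^ 7 * κ)) ^ 3 * a ^ 6 * m ^ 4) ^ 2 := by gcongr
    _ = 8 ^ 6 * 15 ^ 6 * 10 ^ 63 * (a ^ 12 * (κ ^ 9 * d ^ 15 * m ^ 17)) := by ring
    _ ≤ 10 ^ 76 * (a ^ 12 * (κ ^ 9 * d ^ 15 * m ^ 17)) := by gcongr; norm_num
    _ = a ^ 12 * (10 ^ 76 * κ ^ 9 * d ^ 15 * m ^ 17) := by ring

theorem card_pow_le_of_two_le_card {p m : ℕ} {κ : ℝ} (hκ : 1 ≤ κ)
    (hchar : ∀ n : ℕ, 0 < n → n < p → (n : F) ≠ 0) {A : Finset F} (hA : 2 ≤ #A)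
    (hD : #(A - A) ≤ m) (hM : #(A * A) ≤ m) (hp : (#A * m * m : ℝ) ≤ κ * p ^ 2) :
    (#A : ℝ) ^ 39 ≤ 10 ^ 88 * κ ^ 9 * m ^ 32 := by
  set B := A.erase 0
  have hBA : B ⊆ A := erase_subset 0 A
  have hcard : #A ≤ 2 * #B := by
    have : #A - 1 ≤ #B := pred_card_le_card_erase
    omega
  have hBD : #(B - B) ≤ m := (card_le_card (sub_subset_sub hBA hBA)).trans hD
  have hBM : #(B * B) ≤ m := (card_le_card (mul_subset_mul hBA hBA)).trans hM
  have hBp : (#B * #(B - B) * #(B * B) : ℝ) ≤ κ * p ^ 2 := by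
    refine le_trans ?_ hp
    gcongr
  calc (#A : ℝ) ^ 39 ≤ (2 * #B) ^ 39 := by gcongr; exact_mod_cast hcard
    _ = 2 ^ 39 * (#B : ℝ) ^ 39 := mul_pow _ _ _
    _ ≤ 2 ^ 39 * (10 ^ 76 * κ ^ 9 * #(B - B) ^ 15 * #(B * B) ^ 17) := by
        gcongr
        exact card_pow_le_of_zero_notMem hκ hchar (notMem_erase 0 A) hBp
    _ ≤ 2 ^ 39 * (10 ^ 76 * κ ^ 9 * m ^ 15 * m ^ 17) := by gcongr
    _ = 2 ^ 39 * 10 ^ 76 * (κ ^ 9 * m ^ 32) := by ring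
    _ ≤ 10 ^ 88 * (κ ^ 9 * m ^ 32) := by gcongr; norm_num
    _ = 10 ^ 88 * κ ^ 9 * m ^ 32 := by ring

theorem mul_mul_le_rpow_mul_sq {a m K p : ℝ} (ha : 0 ≤ a) (hK : 0 ≤ K) (hp : 0 ≤ p)
    (haK : a ≤ K * p ^ (32 / 55 : ℝ)) (hm : m ^ 32 ≤ a ^ 39) :
    a * m * m ≤ K ^ (55 / 16 : ℝ) * p ^ 2 := by
  refine le_of_pow_le_pow_left₀ (n := 16) (by norm_num) (by positivity) ?_
  calc (a * m * m) ^ 16 = a ^ 16 * m ^ 32 := by ring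
    _ ≤ a ^ 16 * a ^ 39 := by gcongr
    _ = a ^ 55 := by ring
    _ ≤ (K * p ^ (32 / 55 : ℝ)) ^ 55 := by gcongr
    _ = K ^ 55 * p ^ 32 := by
      rw [mul_pow, ← Real.rpow_mul_natCast hp, ← Real.rpow_natCast p 32]
      norm_num
    _ = (K ^ (55 / 16 : ℝ) * p ^ 2) ^ 16 := by
      rw [mul_pow, ← Real.rpow_mul_natCast hK, ← Real.rpow_natCast K 55, ← pow_mul]
      norm_num

theorem card_pow_le {p m : ℕ} {K : ℝ} (hK : 1 ≤ K)
    (hchar : ∀ n : ℕ, 0 < n → n < p → (n : F) ≠ 0) {A : Finset F}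
    (hA : (#A : ℝ) ≤ K * (p : ℝ) ^ (32 / 55 : ℝ)) (hD : #(A - A) ≤ m) (hM : #(A * A) ≤ m) :
    (#A : ℝ) ^ 39 ≤ (1000 * K * m) ^ 32 := by
  rcases le_or_gt (#A ^ 39) (m ^ 32) with hle | hlt
  · have hm : (m : ℝ) ≤ 1000 * K * m := le_mul_of_one_le_left (by positivity) (by linarith)
    calc (#A : ℝ) ^ 39 ≤ (m : ℝ) ^ 32 := by exact_mod_cast hle
      _ ≤ (1000 * K * m) ^ 32 := by gcongr
  have hA0 : A.Nonempty := by
    rw [nonempty_iff_ne_empty]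
    rintro rfl
    simp at hlt
  have hm : 0 < m := hA0.card_pos.trans_le ((card_le_card_sub_right hA0).trans hD)
  have hA2 : 2 ≤ #A := by
    by_contra! h
    have : #A ^ 39 ≤ 1 := pow_le_one' (by omega) 39
    have : 0 < m ^ 32 := by positivity
    omega
  have hK9 : (K ^ (55 / 16 : ℝ)) ^ 9 ≤ K ^ 32 := by
    rw [← Real.rpow_mul_natCast (by positivity), ← Real.rpow_natCast K 32]
    exact Real.rpow_le_rpow_of_exponent_le hK (by norm_num)
  have hp : (#A * m * m : ℝ) ≤ K ^ (55 / 16 : ℝ) * p ^ 2 :=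
    mul_mul_le_rpow_mul_sq (by positivity) (by positivity) (by positivity) hA
      (by exact_mod_cast hlt.le)
  calc (#A : ℝ) ^ 39 ≤ 10 ^ 88 * (K ^ (55 / 16 : ℝ)) ^ 9 * m ^ 32 :=
        card_pow_le_of_two_le_card (Real.one_le_rpow hK (by norm_num)) hchar hA2 hD hM hp
    _ ≤ 1000 ^ 32 * K ^ 32 * m ^ 32 := by gcongr; norm_num
    _ = (1000 * K * m) ^ 32 := by ring

end SumProductEstimate

end SumProduct

open SumProduct in
theorem stmt_17_general {F : Type*} [Field F] [DecidableEq F] {p : ℕ}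
    (hchar : ∀ n : ℕ, 0 < n → n < p → (n : F) ≠ 0) {K : ℝ} {A : Finset F}
    (hA : (A.card : ℝ) ≤ K * (p : ℝ) ^ ((32 : ℝ) / 55)) :
    (A.card : ℝ) ^ ((39 : ℝ) / 32) ≤
      1000 * max 1 K * (max (A - A).card (A * A).card : ℕ) := by
  have hA' : (A.card : ℝ) ≤ max 1 K * (p : ℝ) ^ ((32 : ℝ) / 55) :=
    hA.trans (by gcongr; exact le_max_right 1 K)
  have hpow := card_pow_le (le_max_left 1 K) hchar hA' (le_max_left _ _) (le_max_right _ _)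
  refine le_of_pow_le_pow_left₀ (n := 32) (by norm_num) (by positivity) (le_of_eq_of_le ?_ hpow)
  rw [← Real.rpow_mul_natCast (by positivity), ← Real.rpow_natCast]
  norm_num

theorem stmt_17 :
    ∀ K : ℝ, 0 < K →
      ∃ C : ℝ, 0 < C ∧
        ∀ (p : ℕ), p.Prime →
          ∀ (A : Finset (ZMod p)), A.Nonempty →
            (A.card : ℝ) ≤ K * (p : ℝ) ^ ((32 : ℝ) / 55) →
            (A.card : ℝ) ^ ((39 : ℝ) / 32) ≤
              C * (max 1 (Real.log A.card)) ^ C * (max (A - A).card (A * A).card : ℕ) := by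
  intro K _
  set C : ℝ := 1000 * max 1 K
  have hC : 0 < C := by positivity
  refine ⟨C, hC, fun p hp A _ hA => ?_⟩
  have := Fact.mk hp
  have hchar (n : ℕ) (hn : 0 < n) (hnp : n < p) : (n : ZMod p) ≠ 0 := fun h =>
    (Nat.le_of_dvd hn ((ZMod.natCast_eq_zero_iff n p).mp h)).not_gt hnp
  have hlog : 1 ≤ max 1 (Real.log A.card) ^ C := Real.one_le_rpow (le_max_left _ _) hC.le
  refine (stmt_17_general hchar hA).trans ?_
  exact mul_le_mul_of_nonneg_right (le_mul_of_one_le_right hC.le hlog) (Nat.cast_nonneg _)
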